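/- In the algebra SLF(Ū_q) with convolution product: (i) G_s = (1/[s]) χ^+_s G_1 for all 1 ≤ s ≤ p−1; (ii) χ^+_p G_1 = 0; (iii) (χ^+_s + χ^−_{p−s}) G_t = 0 for all 1 ≤ s, t ≤ p−1; (iv) the subspace V spanned by the elements χ^+_s + χ^−_{p−s} (1 ≤ s ≤ p−1), χ^+_p and χ^−_p is an ideal of SLF(Ū_q). -/

import Mathlib

noncomputable section

open scoped TensorProduct

namespace Uqsl2

/-- Generators of the restricted quantum group. -/
inductive gen : Type | E | F | K | Kinv

/-- The primitive `2p`-th root of unity `q = e^{iπ/p}`. -/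
def q (p : ℕ) : ℂ := Complex.exp (Real.pi * Complex.I / p)

/-- The `q`-integer `[n] = (q^n - q^{-n})/(q - q^{-1})`. -/
def qi (p : ℕ) (n : ℤ) : ℂ := (q p ^ n - q p ^ (-n)) / (q p - (q p)⁻¹)

/-- The `q`-factorial `[m]!`. -/
def qfact (p m : ℕ) : ℂ := ∏ i ∈ Finset.range m, qi p (i + 1)

open FreeAlgebra in
/-- The defining relations of `Ū_q(sl₂)`. -/
inductive rel (p : ℕ) : FreeAlgebra ℂ gen → FreeAlgebra ℂ gen → Prop
  | KKinv : rel p (ι ℂ gen.K * ι ℂ gen.Kinv) 1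
  | KinvK : rel p (ι ℂ gen.Kinv * ι ℂ gen.K) 1
  | Ep : rel p (ι ℂ gen.E ^ p) 0
  | Fp : rel p (ι ℂ gen.F ^ p) 0
  | K2p : rel p (ι ℂ gen.K ^ (2 * p)) 1
  | KE : rel p (ι ℂ gen.K * ι ℂ gen.E) (q p ^ 2 • (ι ℂ gen.E * ι ℂ gen.K))
  | KF : rel p (ι ℂ gen.K * ι ℂ gen.F) ((q p ^ 2)⁻¹ • (ι ℂ gen.F * ι ℂ gen.K))
  | EF : rel p (ι ℂ gen.E * ι ℂ gen.F - ι ℂ gen.F * ι ℂ gen.E)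
             ((q p - (q p)⁻¹)⁻¹ • (ι ℂ gen.K - ι ℂ gen.Kinv))

/-- The restricted quantum group `Ū_q(sl₂)`, presented by generators and relations. -/
abbrev Uq (p : ℕ) := RingQuot (rel p)

def EE (p : ℕ) : Uq p := RingQuot.mkAlgHom ℂ (rel p) (FreeAlgebra.ι ℂ gen.E)
def FF (p : ℕ) : Uq p := RingQuot.mkAlgHom ℂ (rel p) (FreeAlgebra.ι ℂ gen.F)
def KK (p : ℕ) : Uq p := RingQuot.mkAlgHom ℂ (rel p) (FreeAlgebra.ι ℂ gen.K)
def KKinv (p : ℕ) : Uq p := RingQuot.mkAlgHom ℂ (rel p) (FreeAlgebra.ι ℂ gen.Kinv)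

/-! ### The simple modules `X^α(s)` as matrix representations -/

/-- Matrix of `K` on `X^α(s)` in the canonical basis. -/
def XK (p : ℕ) (α : ℂ) (s : ℕ) : Matrix (Fin s) (Fin s) ℂ :=
  Matrix.diagonal fun i => α * q p ^ ((s : ℤ) - 1 - 2 * (i : ℕ))

/-- Matrix of `E` on `X^α(s)` in the canonical basis. -/
def XE (p : ℕ) (α : ℂ) (s : ℕ) : Matrix (Fin s) (Fin s) ℂ :=
  Matrix.of fun i j =>
    if (i : ℕ) + 1 = (j : ℕ) then α * qi p (j : ℕ) * qi p ((s : ℤ) - (j : ℕ)) else 0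

/-- Matrix of `F` on `X^α(s)` in the canonical basis. -/
def XF (s : ℕ) : Matrix (Fin s) (Fin s) ℂ :=
  Matrix.of fun i j => if (i : ℕ) = (j : ℕ) + 1 then (1 : ℂ) else 0

/-- The statement that `ρX α s` is the representation on `X^α(s)` for the relevant
values of `α` and `s`. -/
def IsXRep (p : ℕ) (ρX : (α : ℂ) → (s : ℕ) → (Uq p →ₐ[ℂ] Matrix (Fin s) (Fin s) ℂ)) : Prop :=
  ∀ α : ℂ, (α = 1 ∨ α = -1) → ∀ s : ℕ, 1 ≤ s → s ≤ p →
    ρX α s (KK p) = XK p α s ∧ ρX α s (EE p) = XE p α s ∧ ρX α s (FF p) = XF s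

/-! ### The projective modules `P^α(s)` as matrix representations -/

/-- Index for the standard basis `(b_i, x_j, y_k, a_l)` of `P^α(s)`. -/
abbrev PIdx (p s : ℕ) := Fin s ⊕ (Fin (p - s) ⊕ (Fin (p - s) ⊕ Fin s))

/-- Diagonal of the matrix of `K` on `P^α(s)`. -/
def PKdiag (p : ℕ) (α : ℂ) (s : ℕ) : PIdx p s → ℂ
  | .inl i => α * q p ^ ((s : ℤ) - 1 - 2 * (i : ℕ))
  | .inr (.inl j) => -α * q p ^ ((p : ℤ) - s - 1 - 2 * (j : ℕ))
  | .inr (.inr (.inl k)) => -α * q p ^ ((p : ℤ) - s - 1 - 2 * (k : ℕ))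
  | .inr (.inr (.inr l)) => α * q p ^ ((s : ℤ) - 1 - 2 * (l : ℕ))

/-- Matrix of `K` on `P^α(s)` in the standard basis. -/
def PK (p : ℕ) (α : ℂ) (s : ℕ) : Matrix (PIdx p s) (PIdx p s) ℂ :=
  Matrix.diagonal (PKdiag p α s)

/-- Matrix of `E` on `P^α(s)` in the standard basis. -/
def PE (p : ℕ) (α : ℂ) (s : ℕ) : Matrix (PIdx p s) (PIdx p s) ℂ :=
  Matrix.of fun i j =>
    match i, j with
    | .inl i, .inl j =>
        if (i : ℕ) + 1 = (j : ℕ) then α * qi p (j : ℕ) * qi p ((s : ℤ) - (j : ℕ)) else 0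
    | .inr (.inl jx), .inl j => if (j : ℕ) = 0 ∧ (jx : ℕ) + 1 = p - s then 1 else 0
    | .inr (.inr (.inr l)), .inl j => if (l : ℕ) + 1 = (j : ℕ) then 1 else 0
    | .inr (.inl i), .inr (.inl j) =>
        if (i : ℕ) + 1 = (j : ℕ) then -α * qi p (j : ℕ) * qi p ((p : ℤ) - s - (j : ℕ)) else 0
    | .inr (.inr (.inl i)), .inr (.inr (.inl k)) =>
        if (i : ℕ) + 1 = (k : ℕ) then -α * qi p (k : ℕ) * qi p ((p : ℤ) - s - (k : ℕ)) else 0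
    | .inr (.inr (.inr l)), .inr (.inr (.inl k)) =>
        if (k : ℕ) = 0 ∧ (l : ℕ) + 1 = s then 1 else 0
    | .inr (.inr (.inr i)), .inr (.inr (.inr l)) =>
        if (i : ℕ) + 1 = (l : ℕ) then α * qi p (l : ℕ) * qi p ((s : ℤ) - (l : ℕ)) else 0
    | _, _ => 0

/-- Matrix of `F` on `P^α(s)` in the standard basis. -/
def PF (p s : ℕ) : Matrix (PIdx p s) (PIdx p s) ℂ :=
  Matrix.of fun i j =>
    match i, j with
    | .inl i, .inl j => if (i : ℕ) = (j : ℕ) + 1 then (1 : ℂ) else 0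
    | .inr (.inr (.inl k)), .inl j => if (j : ℕ) + 1 = s ∧ (k : ℕ) = 0 then 1 else 0
    | .inr (.inl i), .inr (.inl j) => if (i : ℕ) = (j : ℕ) + 1 then 1 else 0
    | .inr (.inr (.inr l)), .inr (.inl j) => if (j : ℕ) + 1 = p - s ∧ (l : ℕ) = 0 then 1 else 0
    | .inr (.inr (.inl i)), .inr (.inr (.inl k)) => if (i : ℕ) = (k : ℕ) + 1 then 1 else 0
    | .inr (.inr (.inr i)), .inr (.inr (.inr l)) => if (i : ℕ) = (l : ℕ) + 1 then 1 else 0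
    | _, _ => 0

/-- The statement that `ρP α s` is the representation on `P^α(s)` for the relevant
values of `α` and `s`. -/
def IsPRep (p : ℕ)
    (ρP : (α : ℂ) → (s : ℕ) → (Uq p →ₐ[ℂ] Matrix (PIdx p s) (PIdx p s) ℂ)) : Prop :=
  ∀ α : ℂ, (α = 1 ∨ α = -1) → ∀ s : ℕ, 1 ≤ s → s ≤ p - 1 →
    ρP α s (KK p) = PK p α s ∧ ρP α s (EE p) = PE p α s ∧ ρP α s (FF p) = PF p s

/-! ### Symmetric linear forms, characters, and the forms `G_s` -/

/-- Symmetric linear forms. -/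
def IsSLF (p : ℕ) (φ : Uq p →ₗ[ℂ] ℂ) : Prop := ∀ x y : Uq p, φ (x * y) = φ (y * x)

/-- The character of a matrix representation. -/
def chiOf (p : ℕ) {n : Type} [Fintype n] [DecidableEq n]
    (ρ : Uq p →ₐ[ℂ] Matrix n n ℂ) : Uq p →ₗ[ℂ] ℂ :=
  (Matrix.traceLinearMap n ℂ ℂ).comp ρ.toLinearMap

/-- The matrix entry functional. -/
def entry {n : Type} (i j : n) : Matrix n n ℂ →ₗ[ℂ] ℂ where
  toFun M := M i j
  map_add' _ _ := rfl
  map_smul' _ _ := rfl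

/-- The symmetric linear form `G_s = tr H^+_s + tr H^-_{p-s}`. -/
def GOf (p : ℕ)
    (ρP : (α : ℂ) → (s : ℕ) → (Uq p →ₐ[ℂ] Matrix (PIdx p s) (PIdx p s) ℂ))
    (s : ℕ) : Uq p →ₗ[ℂ] ℂ :=
  (∑ i : Fin s,
    (entry (Sum.inr (Sum.inr (Sum.inr i))) (Sum.inl i)).comp (ρP 1 s).toLinearMap) +
  (∑ j : Fin (p - s),
    (entry (Sum.inr (Sum.inr (Sum.inr j))) (Sum.inl j)).comp (ρP (-1) (p - s)).toLinearMap)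

/-! ### Convolution product -/

/-- The convolution product of two linear forms, with respect to a comultiplication `Δ`. -/
def conv (p : ℕ) (Δ : Uq p →ₐ[ℂ] (Uq p ⊗[ℂ] Uq p)) (φ ψ : Uq p →ₗ[ℂ] ℂ) :
    Uq p →ₗ[ℂ] ℂ :=
  (LinearMap.mul' ℂ ℂ).comp ((TensorProduct.map φ ψ).comp Δ.toLinearMap)

/-- The statement that `Δ` is the comultiplication of `Ū_q(sl₂)`. -/
def IsCoprod (p : ℕ) (Δ : Uq p →ₐ[ℂ] (Uq p ⊗[ℂ] Uq p)) : Prop :=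
  Δ (EE p) = 1 ⊗ₜ[ℂ] EE p + EE p ⊗ₜ[ℂ] KK p ∧
  Δ (FF p) = FF p ⊗ₜ[ℂ] 1 + KKinv p ⊗ₜ[ℂ] FF p ∧
  Δ (KK p) = KK p ⊗ₜ[ℂ] KK p ∧
  Δ (KKinv p) = KKinv p ⊗ₜ[ℂ] KKinv p

/-- The subspace `V` spanned by `χ^+_s + χ^-_{p-s}` (`1 ≤ s ≤ p-1`), `χ^+_p`, `χ^-_p`. -/
def Vsub (p : ℕ)
    (ρX : (α : ℂ) → (s : ℕ) → (Uq p →ₐ[ℂ] Matrix (Fin s) (Fin s) ℂ)) :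
    Submodule ℂ (Uq p →ₗ[ℂ] ℂ) :=
  Submodule.span ℂ
    ((Set.range fun s : Fin (p - 1) =>
        chiOf p (ρX 1 ((s : ℕ) + 1)) + chiOf p (ρX (-1) (p - ((s : ℕ) + 1))))
      ∪ {chiOf p (ρX 1 p), chiOf p (ρX (-1) p)})

/-!
A symmetric linear form kills every vector of non-zero weight for conjugation by `K`, hence is
determined by its values on the products `C^a K^c`, where `C` is the central Casimir element. So two
forms which satisfy the same linear recurrence of order two under `x ↦ C x` agree as soon as they
agree on `K^c` and on `C K^c`.

For (iv), the generators of `V` are the characters `ζ_l` of the `2p` Verma modules. Filtering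
`x ↦ ∑ x' ⊗ ζ_l(x'')` by the vectors `Δ(F)^i (1 ⊗ v₀)` leaves only the Borel subalgebra `⟨E, K⟩`, on
which a form `φ` is a combination of characters; hence `φ ζ_l` is the corresponding combination of
Verma characters, governed by the values `φ(K^c)`. As `G_t(K^c) = 0`, this also gives (iii).

For (i) and (ii), the recurrence principle yields `χ^α_{s+1} χ^+_2 = χ^α_{s+2} + χ^α_s` and
`[s+1] G_{s+1} χ^+_2 = [s+2] G_{s+2} + [s] G_s`, whose initial values coincide; thus
`G_1 χ^+_s = [s] G_s`. All these products have the character on the right. The Cartan involution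
`E ↔ F`, `K ↔ K⁻¹` reverses the coproduct and fixes every `χ^±_s` and `G_s`, which exchanges the two
factors.
-/

lemma q_isPrimitiveRoot {p : ℕ} (hp : 2 ≤ p) : IsPrimitiveRoot (q p) (2 * p) := by
  have hp0 : (p : ℂ) ≠ 0 := by exact_mod_cast (by omega : p ≠ 0)
  convert Complex.isPrimitiveRoot_exp (2 * p) (by omega) using 1
  rw [q]
  congr 1
  push_cast
  field_simp

lemma q_ne_zero (p : ℕ) : q p ≠ 0 := Complex.exp_ne_zero _

lemma q_pow_self {p : ℕ} (hp : 2 ≤ p) : q p ^ p = -1 := by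
  have hsq : (q p ^ p) ^ 2 = 1 := by rw [← pow_mul, mul_comm, (q_isPrimitiveRoot hp).pow_eq_one]
  exact (sq_eq_one_iff.mp hsq).resolve_left
    ((q_isPrimitiveRoot hp).pow_ne_one_of_pos_of_lt (by omega) (by omega))

lemma q_pow_two_mul_ne_one {p n : ℕ} (hp : 2 ≤ p) (hn : 0 < n) (hnp : n < p) :
    q p ^ (2 * n) ≠ 1 :=
  (q_isPrimitiveRoot hp).pow_ne_one_of_pos_of_lt (by omega) (by omega)

/-- The scalar `q - q⁻¹`, the common denominator of the `q`-integers. -/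
def qDiff (p : ℕ) : ℂ := q p - (q p)⁻¹

lemma qDiff_ne_zero {p : ℕ} (hp : 2 ≤ p) : qDiff p ≠ 0 := by
  have hq := q_ne_zero p
  intro h
  refine q_pow_two_mul_ne_one hp one_pos (by omega) ?_
  rw [qDiff] at h
  field_simp at h
  linear_combination h

lemma qi_mul_qDiff {p : ℕ} (hp : 2 ≤ p) (n : ℤ) :
    qi p n * qDiff p = q p ^ n - (q p ^ n)⁻¹ := by
  rw [qi, ← qDiff, div_mul_cancel₀ _ (qDiff_ne_zero hp), zpow_neg]

lemma qi_one {p : ℕ} (hp : 2 ≤ p) : qi p 1 = 1 :=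
  mul_right_cancel₀ (qDiff_ne_zero hp) (by rw [qi_mul_qDiff hp, zpow_one, one_mul, qDiff])

lemma qi_self {p : ℕ} (hp : 2 ≤ p) : qi p p = 0 :=
  mul_right_cancel₀ (qDiff_ne_zero hp) (by simp [qi_mul_qDiff hp, q_pow_self hp])

lemma qi_natCast_ne_zero {p s : ℕ} (hp : 2 ≤ p) (hs : 0 < s) (hsp : s < p) : qi p s ≠ 0 := by
  have hq := pow_ne_zero s (q_ne_zero p)
  intro h
  have hzero := qi_mul_qDiff hp s
  rw [h, zero_mul, zpow_natCast] at hzero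
  refine q_pow_two_mul_ne_one hp hs hsp ?_
  field_simp at hzero
  linear_combination -hzero

section Relations

variable (p : ℕ)

lemma KK_mul_KKinv : KK p * KKinv p = 1 := by
  simpa only [KK, KKinv, map_mul, map_one] using RingQuot.mkAlgHom_rel ℂ (rel.KKinv (p := p))

lemma KKinv_mul_KK : KKinv p * KK p = 1 := by
  simpa only [KK, KKinv, map_mul, map_one] using RingQuot.mkAlgHom_rel ℂ (rel.KinvK (p := p))

lemma EE_pow_self : EE p ^ p = 0 := by
  simpa only [EE, map_pow, map_zero] using RingQuot.mkAlgHom_rel ℂ (rel.Ep (p := p))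

lemma FF_pow_self : FF p ^ p = 0 := by
  simpa only [FF, map_pow, map_zero] using RingQuot.mkAlgHom_rel ℂ (rel.Fp (p := p))

lemma KK_pow_two_mul : KK p ^ (2 * p) = 1 := by
  simpa only [KK, map_pow, map_one] using RingQuot.mkAlgHom_rel ℂ (rel.K2p (p := p))

lemma KK_mul_EE : KK p * EE p = q p ^ 2 • (EE p * KK p) := by
  simpa only [KK, EE, map_mul, map_smul] using RingQuot.mkAlgHom_rel ℂ (rel.KE (p := p))

lemma KK_mul_FF : KK p * FF p = (q p ^ 2)⁻¹ • (FF p * KK p) := by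
  simpa only [KK, FF, map_mul, map_smul] using RingQuot.mkAlgHom_rel ℂ (rel.KF (p := p))

lemma EE_mul_FF_sub : EE p * FF p - FF p * EE p = (qDiff p)⁻¹ • (KK p - KKinv p) := by
  simpa only [EE, FF, KK, KKinv, qDiff, map_mul, map_sub, map_smul] using
    RingQuot.mkAlgHom_rel ℂ (rel.EF (p := p))

lemma KKinv_mul_EE : KKinv p * EE p = (q p ^ 2)⁻¹ • (EE p * KKinv p) := by
  have hq := pow_ne_zero 2 (q_ne_zero p)
  calc KKinv p * EE p = (q p ^ 2)⁻¹ • (KKinv p * (q p ^ 2 • (EE p * KK p)) * KKinv p) := by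
        rw [mul_smul_comm, smul_mul_assoc, inv_smul_smul₀ hq, mul_assoc, mul_assoc, KK_mul_KKinv,
          mul_one]
    _ = (q p ^ 2)⁻¹ • (EE p * KKinv p) := by
        rw [← KK_mul_EE, ← mul_assoc, KKinv_mul_KK, one_mul]

lemma KKinv_mul_FF : KKinv p * FF p = q p ^ 2 • (FF p * KKinv p) := by
  have hq := pow_ne_zero 2 (q_ne_zero p)
  calc KKinv p * FF p = q p ^ 2 • (KKinv p * ((q p ^ 2)⁻¹ • (FF p * KK p)) * KKinv p) := by
        rw [mul_smul_comm, smul_mul_assoc, smul_inv_smul₀ hq, mul_assoc, mul_assoc, KK_mul_KKinv,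
          mul_one]
    _ = q p ^ 2 • (FF p * KKinv p) := by
        rw [← KK_mul_FF, ← mul_assoc, KKinv_mul_KK, one_mul]

end Relations

lemma KKinv_eq_pow {p : ℕ} (hp : 2 ≤ p) : KKinv p = KK p ^ (2 * p - 1) := by
  have h : KK p ^ (2 * p - 1) * KK p = 1 := by
    rw [← pow_succ, Nat.sub_add_cancel (by omega), KK_pow_two_mul]
  exact (left_inv_eq_right_inv h (KK_mul_KKinv p)).symm

@[elab_as_elim]
lemma Uq_induction {p : ℕ} (hp : 2 ≤ p) {P : Uq p → Prop} (E : P (EE p)) (F : P (FF p))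
    (K : P (KK p)) (algebraMap : ∀ c : ℂ, P (algebraMap ℂ _ c))
    (add : ∀ x y, P x → P y → P (x + y)) (mul : ∀ x y, P x → P y → P (x * y)) (x : Uq p) :
    P x := by
  obtain ⟨y, rfl⟩ := RingQuot.mkAlgHom_surjective ℂ (rel p) x
  have pow_KK (n : ℕ) : P (KK p ^ n) := by
    induction n with
    | zero => simpa using algebraMap 1
    | succ n ih => exact pow_succ (KK p) n ▸ mul _ _ ih K
  induction y using FreeAlgebra.induction with
  | grade0 c => exact (AlgHom.commutes (RingQuot.mkAlgHom ℂ (rel p)) c).symm ▸ algebraMap c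
  | grade1 g =>
    cases g with
    | E => exact E
    | F => exact F
    | K => exact K
    | Kinv => exact show P (KKinv p) from (KKinv_eq_pow hp).symm ▸ pow_KK _
  | mul a b ha hb => exact (map_mul (RingQuot.mkAlgHom ℂ (rel p)) a b).symm ▸ mul _ _ ha hb
  | add a b ha hb => exact (map_add (RingQuot.mkAlgHom ℂ (rel p)) a b).symm ▸ add _ _ ha hb

lemma Uq_algHom_ext {p : ℕ} (hp : 2 ≤ p) {A : Type*} [Semiring A] [Algebra ℂ A]
    {f g : Uq p →ₐ[ℂ] A} (hE : f (EE p) = g (EE p)) (hF : f (FF p) = g (FF p))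
    (hK : f (KK p) = g (KK p)) : f = g := by
  refine AlgHom.ext fun x ↦ ?_
  induction x using Uq_induction hp with
  | E => exact hE
  | F => exact hF
  | K => exact hK
  | algebraMap c => rw [AlgHom.commutes, AlgHom.commutes]
  | add x y hx hy => rw [map_add, map_add, hx, hy]
  | mul x y hx hy => rw [map_mul, map_mul, hx, hy]

/-- The Casimir element, normalised as `(q - q⁻¹)² F E + q K + q⁻¹ K⁻¹`. -/
def casimir (p : ℕ) : Uq p :=
  qDiff p ^ 2 • (FF p * EE p) + q p • KK p + (q p)⁻¹ • KKinv p

lemma FF_mul_EE {p : ℕ} (hp : 2 ≤ p) :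
    FF p * EE p = (qDiff p ^ 2)⁻¹ • (casimir p - q p • KK p - (q p)⁻¹ • KKinv p) := by
  rw [casimir, add_sub_right_comm, add_sub_cancel_right, add_sub_cancel_right,
    inv_smul_smul₀ (pow_ne_zero 2 (qDiff_ne_zero hp))]

lemma casimir_eq_EE_mul_FF {p : ℕ} (hp : 2 ≤ p) :
    casimir p = qDiff p ^ 2 • (EE p * FF p) + (q p)⁻¹ • KK p + q p • KKinv p := by
  have hd := qDiff_ne_zero hp
  rw [casimir, ← sub_add_cancel (EE p * FF p) (FF p * EE p), EE_mul_FF_sub]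
  match_scalars <;> field_simp <;> rw [qDiff] <;> ring

lemma EE_mul_FF {p : ℕ} (hp : 2 ≤ p) :
    EE p * FF p = (qDiff p ^ 2)⁻¹ • (casimir p - (q p)⁻¹ • KK p - q p • KKinv p) := by
  rw [casimir_eq_EE_mul_FF hp, add_sub_right_comm, add_sub_cancel_right, add_sub_cancel_right,
    inv_smul_smul₀ (pow_ne_zero 2 (qDiff_ne_zero hp))]

lemma casimir_commute {p : ℕ} (hp : 2 ≤ p) (x : Uq p) : Commute (casimir p) x := by
  have hq := q_ne_zero p
  induction x using Uq_induction hp with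
  | E =>
    rw [Commute, SemiconjBy]
    nth_rewrite 1 [casimir_eq_EE_mul_FF hp]
    rw [casimir]
    simp only [add_mul, mul_add, smul_mul_assoc, mul_smul_comm, mul_assoc, KK_mul_EE, KKinv_mul_EE]
    match_scalars <;> field_simp
  | F =>
    rw [Commute, SemiconjBy]
    nth_rewrite 2 [casimir_eq_EE_mul_FF hp]
    rw [casimir]
    simp only [add_mul, mul_add, smul_mul_assoc, mul_smul_comm, mul_assoc, KK_mul_FF, KKinv_mul_FF]
    match_scalars <;> field_simp
  | K =>
    rw [Commute, SemiconjBy, casimir]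
    have hKFE : KK p * (FF p * EE p) = FF p * (EE p * KK p) := by
      rw [← mul_assoc, KK_mul_FF, smul_mul_assoc, mul_assoc, KK_mul_EE, mul_smul_comm,
        inv_smul_smul₀ (pow_ne_zero 2 hq)]
    simp only [add_mul, mul_add, smul_mul_assoc, mul_smul_comm, mul_assoc, hKFE, KK_mul_KKinv,
      KKinv_mul_KK]
  | algebraMap c => exact (Algebra.commutes c _).symm
  | add x y hx hy => exact hx.add_right hy
  | mul x y hx hy => exact hx.mul_right hy

/-! ### Symmetric linear forms and the Casimir element -/

lemma pow_mul_pow_of_mul_eq_smul {R A : Type*} [CommSemiring R] [Semiring A] [Algebra R A]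
    {k e : A} {ζ : R} (h : k * e = ζ • (e * k)) (c a : ℕ) :
    k ^ c * e ^ a = ζ ^ (c * a) • (e ^ a * k ^ c) := by
  have base (a : ℕ) : k * e ^ a = ζ ^ a • (e ^ a * k) := by
    induction a with
    | zero => simp
    | succ a ih =>
      rw [pow_succ, ← mul_assoc, ih, smul_mul_assoc, mul_assoc, h, mul_smul_comm, smul_smul,
        ← mul_assoc, ← pow_succ, ← pow_succ]
  induction c with
  | zero => simp
  | succ c ih =>
    rw [pow_succ', mul_assoc, ih, mul_smul_comm, ← mul_assoc, base, smul_mul_assoc, smul_smul,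
      mul_assoc, ← pow_succ', ← pow_add, Nat.succ_mul]

/-- The monomials `tᵃ Kᶜ yᵇ`, where `t` is the Casimir element; the cases `y = E` and `y = F`
together span `Ū_q`. -/
def casimirMonomials {p : ℕ} (y : Uq p) : Set (Uq p) :=
  Set.range fun n : ℕ × ℕ × ℕ ↦ casimir p ^ n.1 * (KK p ^ n.2.1 * y ^ n.2.2)

lemma mul_casimir_pow_mul_KK_pow_mul {p : ℕ} (hp : 2 ≤ p) {e : Uq p} {ζ : ℂ} (hζ : ζ ≠ 0)
    (hKe : KK p * e = ζ • (e * KK p)) (a c : ℕ) (y : Uq p) :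
    e * (casimir p ^ a * (KK p ^ c * y)) =
      (ζ ^ c)⁻¹ • (casimir p ^ a * (KK p ^ c * (e * y))) := by
  have h : KK p ^ c * e = ζ ^ c • (e * KK p ^ c) := by
    simpa using pow_mul_pow_of_mul_eq_smul hKe c 1
  rw [← mul_assoc, ((casimir_commute hp e).pow_left a).eq.symm, mul_assoc, ← mul_assoc e,
    ← mul_assoc (KK p ^ c), h, smul_mul_assoc, mul_smul_comm, inv_smul_smul₀ (pow_ne_zero c hζ)]

lemma mul_mem_span_casimirMonomials {p : ℕ} (hp : 2 ≤ p) {e f : Uq p} {ζ : ℂ} (hζ : ζ ≠ 0)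
    (hKe : KK p * e = ζ • (e * KK p)) {r₁ r₂ r₃ : ℂ}
    (hef : e * f = r₁ • (casimir p - r₂ • KK p - r₃ • KKinv p)) {w : Uq p}
    (hw : w ∈ Submodule.span ℂ (casimirMonomials e ∪ casimirMonomials f)) :
    e * w ∈ Submodule.span ℂ (casimirMonomials e ∪ casimirMonomials f) := by
  set W := Submodule.span ℂ (casimirMonomials e ∪ casimirMonomials f)
  have mem_e (a c b : ℕ) : casimir p ^ a * (KK p ^ c * e ^ b) ∈ W :=
    Submodule.subset_span (Or.inl ⟨(a, c, b), rfl⟩)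
  have mem_f (a c b : ℕ) : casimir p ^ a * (KK p ^ c * f ^ b) ∈ W :=
    Submodule.subset_span (Or.inr ⟨(a, c, b), rfl⟩)
  suffices W ≤ W.comap (LinearMap.mulLeft ℂ e) from this hw
  rw [Submodule.span_le]
  rintro _ (⟨⟨a, c, b⟩, rfl⟩ | ⟨⟨a, c, b⟩, rfl⟩) <;>
    change e * (casimir p ^ a * (KK p ^ c * _)) ∈ W <;>
    rw [mul_casimir_pow_mul_KK_pow_mul hp hζ hKe]
  · rw [← pow_succ']
    exact W.smul_mem _ (mem_e a c (b + 1))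
  · refine W.smul_mem _ ?_
    cases b with
    | zero => simpa using mem_e a c 1
    | succ b =>
      have expand : casimir p ^ a * (KK p ^ c * (e * f ^ (b + 1))) =
          r₁ • (casimir p ^ (a + 1) * (KK p ^ c * f ^ b)
            - r₂ • (casimir p ^ a * (KK p ^ (c + 1) * f ^ b))
            - r₃ • (casimir p ^ a * (KK p ^ (c + (2 * p - 1)) * f ^ b))) := by
        rw [pow_succ' f, ← mul_assoc e, hef, KKinv_eq_pow hp]
        simp only [smul_mul_assoc, mul_smul_comm, sub_mul, mul_sub, ← mul_assoc, pow_add, pow_one]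
        rw [mul_assoc (casimir p ^ a), ← ((casimir_commute hp (KK p)).pow_right c).eq, mul_assoc]
        simp only [mul_assoc]
      rw [expand]
      exact W.smul_mem _ (W.sub_mem (W.sub_mem (mem_f _ _ _) (W.smul_mem _ (mem_f _ _ _)))
        (W.smul_mem _ (mem_f _ _ _)))

lemma span_casimirMonomials {p : ℕ} (hp : 2 ≤ p) :
    Submodule.span ℂ (casimirMonomials (EE p) ∪ casimirMonomials (FF p)) = ⊤ := by
  have hq := pow_ne_zero 2 (q_ne_zero p)
  set W := Submodule.span ℂ (casimirMonomials (EE p) ∪ casimirMonomials (FF p)) with hW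
  have mul_mem (x : Uq p) : ∀ w ∈ W, x * w ∈ W := by
    induction x using Uq_induction hp with
    | E => exact fun w ↦ mul_mem_span_casimirMonomials hp hq (KK_mul_EE p) (EE_mul_FF hp)
    | F =>
      rw [hW, Set.union_comm]
      exact fun w ↦ mul_mem_span_casimirMonomials hp (inv_ne_zero hq) (KK_mul_FF p) (FF_mul_EE hp)
    | K =>
      suffices W ≤ W.comap (LinearMap.mulLeft ℂ (KK p)) from this
      rw [Submodule.span_le]
      rintro _ (⟨⟨a, c, b⟩, rfl⟩ | ⟨⟨a, c, b⟩, rfl⟩) <;>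
        change KK p * (casimir p ^ a * (KK p ^ c * _)) ∈ W <;>
        rw [mul_casimir_pow_mul_KK_pow_mul hp one_ne_zero (one_smul ℂ _).symm,
          ← mul_assoc (KK p ^ c), ← pow_succ]
      · exact W.smul_mem _ (Submodule.subset_span (Or.inl ⟨(a, c + 1, b), rfl⟩))
      · exact W.smul_mem _ (Submodule.subset_span (Or.inr ⟨(a, c + 1, b), rfl⟩))
    | algebraMap c => exact fun w hw ↦ Algebra.smul_def c w ▸ W.smul_mem c hw
    | add x y hx hy => exact fun w hw ↦ (add_mul x y w).symm ▸ W.add_mem (hx w hw) (hy w hw)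
    | mul x y hx hy => exact fun w hw ↦ (mul_assoc x y w).symm ▸ hx _ (hy w hw)
  have one_mem : (1 : Uq p) ∈ W := Submodule.subset_span (Or.inl ⟨0, by simp⟩)
  exact Submodule.eq_top_iff'.mpr fun x ↦ mul_one x ▸ mul_mem x 1 one_mem

namespace IsSLF

variable {p : ℕ} {φ ψ : Uq p →ₗ[ℂ] ℂ}

lemma add (hφ : IsSLF p φ) (hψ : IsSLF p ψ) : IsSLF p (φ + ψ) := fun x y ↦ by
  rw [LinearMap.add_apply, LinearMap.add_apply, hφ, hψ]

lemma sub (hφ : IsSLF p φ) (hψ : IsSLF p ψ) : IsSLF p (φ - ψ) := fun x y ↦ by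
  rw [LinearMap.sub_apply, LinearMap.sub_apply, hφ, hψ]

lemma smul (c : ℂ) (hφ : IsSLF p φ) : IsSLF p (c • φ) := fun x y ↦ by
  rw [LinearMap.smul_apply, LinearMap.smul_apply, hφ]

lemma apply_eq_zero_of_KK_mul (hφ : IsSLF p φ) {y : Uq p} {ζ : ℂ} (hζ : ζ ≠ 1)
    (hy : KK p * y = ζ • (y * KK p)) : φ y = 0 := by
  have h : φ y = ζ * φ y := by
    calc φ y = φ (KKinv p * (KK p * y)) := by rw [← mul_assoc, KKinv_mul_KK, one_mul]
      _ = φ (KK p * y * KKinv p) := hφ _ _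
      _ = ζ * φ y := by
        rw [hy, smul_mul_assoc, mul_assoc, KK_mul_KKinv, mul_one, map_smul, smul_eq_mul]
  exact (mul_eq_zero.mp (by linear_combination h : (1 - ζ) * φ y = 0)).resolve_left
    (sub_ne_zero.mpr hζ.symm)

lemma apply_mul_pow_eq_zero (hφ : IsSLF p φ) {y z : Uq p} {ζ : ℂ} (hζ : IsPrimitiveRoot ζ p)
    (hKy : KK p * y = ζ • (y * KK p)) (hy : y ^ p = 0) (hz : Commute (KK p) z) {b : ℕ}
    (hb : b ≠ 0) : φ (z * y ^ b) = 0 := by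
  rcases lt_or_ge b p with hbp | hbp
  · refine hφ.apply_eq_zero_of_KK_mul (hζ.pow_ne_one_of_pos_of_lt hb hbp) ?_
    have h : KK p * y ^ b = ζ ^ b • (y ^ b * KK p) := by
      simpa using pow_mul_pow_of_mul_eq_smul hKy 1 b
    rw [← mul_assoc, hz.eq, mul_assoc, h, mul_smul_comm, mul_assoc]
  · rw [pow_eq_zero_of_le hbp hy, mul_zero, map_zero]

lemma eq_zero (hp : 2 ≤ p) (hφ : IsSLF p φ)
    (h : ∀ a c : ℕ, φ (casimir p ^ a * KK p ^ c) = 0) : φ = 0 := by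
  have hq : IsPrimitiveRoot (q p ^ 2) p := (q_isPrimitiveRoot hp).pow (by omega) rfl
  have comm (a c : ℕ) : Commute (KK p) (casimir p ^ a * KK p ^ c) :=
    ((casimir_commute hp (KK p)).symm.pow_right a).mul_right (Commute.self_pow (KK p) c)
  refine LinearMap.ext_on (span_casimirMonomials hp) ?_
  rintro _ (⟨⟨a, c, b⟩, rfl⟩ | ⟨⟨a, c, b⟩, rfl⟩) <;>
    dsimp only <;> rw [LinearMap.zero_apply, ← mul_assoc] <;> rcases eq_or_ne b 0 with rfl | hb
  · simpa using h a c
  · exact hφ.apply_mul_pow_eq_zero hq (KK_mul_EE p) (EE_pow_self p) (comm a c) hb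
  · simpa using h a c
  · exact hφ.apply_mul_pow_eq_zero hq.inv (KK_mul_FF p) (FF_pow_self p) (comm a c) hb

lemma eq_zero_of_casimir_recurrence (hp : 2 ≤ p) (hφ : IsSLF p φ) {u v : ℂ}
    (hrec : ∀ x, φ (casimir p * (casimir p * x)) = u * φ (casimir p * x) + v * φ x)
    (h₀ : ∀ c : ℕ, φ (KK p ^ c) = 0) (h₁ : ∀ c : ℕ, φ (casimir p * KK p ^ c) = 0) : φ = 0 := by
  refine hφ.eq_zero hp fun a c ↦ ?_
  induction a using Nat.twoStepInduction with
  | zero => simpa using h₀ c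
  | one => simpa using h₁ c
  | more a ih ih' =>
    rw [pow_succ', mul_assoc] at ih'
    rw [pow_succ', pow_succ', mul_assoc, mul_assoc, hrec, ih, ih', mul_zero, mul_zero, add_zero]

lemma eq_of_casimir_eigenform (hp : 2 ≤ p) (hφ : IsSLF p φ) (hψ : IsSLF p ψ) {β : ℂ}
    (hφt : ∀ x, φ (casimir p * x) = β * φ x) (hψt : ∀ x, ψ (casimir p * x) = β * ψ x)
    (h : ∀ c : ℕ, φ (KK p ^ c) = ψ (KK p ^ c)) : φ = ψ := by
  refine sub_eq_zero.mp ((hφ.sub hψ).eq_zero_of_casimir_recurrence hp (u := β) (v := 0) ?_ ?_ ?_)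
  · intro x
    simp only [LinearMap.sub_apply, hφt, hψt]
    ring
  · intro c
    rw [LinearMap.sub_apply, h, sub_self]
  · intro c
    rw [LinearMap.sub_apply, hφt, hψt, h, sub_self]

end IsSLF

lemma isSLF_chiOf {p : ℕ} {n : Type} [Fintype n] [DecidableEq n]
    (ρ : Uq p →ₐ[ℂ] Matrix n n ℂ) : IsSLF p (chiOf p ρ) := fun x y ↦ by
  change (ρ (x * y)).trace = (ρ (y * x)).trace
  rw [map_mul, map_mul, Matrix.trace_mul_comm]

/-! ### Convolution with characters -/

lemma IsSLF.trace_mul_comm {p : ℕ} {φ : Uq p →ₗ[ℂ] ℂ} (hφ : IsSLF p φ) {m n : Type*} [Fintype m]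
    [Fintype n] (M : Matrix m n (Uq p)) (N : Matrix n m (Uq p)) :
    φ (M * N).trace = φ (N * M).trace := by
  simp only [Matrix.trace, Matrix.diag_apply, Matrix.mul_apply, map_sum]
  rw [Finset.sum_comm]
  exact Finset.sum_congr rfl fun i _ ↦ Finset.sum_congr rfl fun j _ ↦ hφ _ _

lemma matrixEquivTensor_symm_tmul_apply {R A n : Type*} [CommSemiring R] [Semiring A]
    [Algebra R A] [Fintype n] [DecidableEq n] (a : A) (M : Matrix n n R) (i j : n) :
    (matrixEquivTensor n R A).symm (a ⊗ₜ[R] M) i j = M i j • a := by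
  rw [matrixEquivTensor_apply_symm, Matrix.smul_apply, Matrix.map_apply, smul_eq_mul,
    ← Algebra.commutes, ← Algebra.smul_def]

section Convolution

variable {p : ℕ} (Δ : Uq p →ₐ[ℂ] (Uq p ⊗[ℂ] Uq p))

lemma conv_smul_left (c : ℂ) (φ ψ : Uq p →ₗ[ℂ] ℂ) :
    conv p Δ (c • φ) ψ = c • conv p Δ φ ψ := by
  simp only [conv, TensorProduct.map_smul_left, LinearMap.smul_comp, LinearMap.comp_smul]

lemma conv_add_left (φ φ' ψ : Uq p →ₗ[ℂ] ℂ) :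
    conv p Δ (φ + φ') ψ = conv p Δ φ ψ + conv p Δ φ' ψ := by
  simp only [conv, TensorProduct.map_add_left, LinearMap.add_comp, LinearMap.comp_add]

lemma conv_add_right (φ ψ ψ' : Uq p →ₗ[ℂ] ℂ) :
    conv p Δ φ (ψ + ψ') = conv p Δ φ ψ + conv p Δ φ ψ' := by
  simp only [conv, TensorProduct.map_add_right, LinearMap.add_comp, LinearMap.comp_add]

lemma conv_smul_right (c : ℂ) (φ ψ : Uq p →ₗ[ℂ] ℂ) :
    conv p Δ φ (c • ψ) = c • conv p Δ φ ψ := by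
  simp only [conv, TensorProduct.map_smul_right, LinearMap.smul_comp, LinearMap.comp_smul]

lemma IsCoprod.coassoc {Δ : Uq p →ₐ[ℂ] (Uq p ⊗[ℂ] Uq p)} (hp : 2 ≤ p) (hΔ : IsCoprod p Δ) :
    ((Algebra.TensorProduct.assoc ℂ ℂ ℂ (Uq p) (Uq p) (Uq p)).toAlgHom.comp
      ((Algebra.TensorProduct.map Δ (AlgHom.id ℂ (Uq p))).comp Δ)) =
      (Algebra.TensorProduct.map (AlgHom.id ℂ (Uq p)) Δ).comp Δ := by
  obtain ⟨hE, hF, hK, hKinv⟩ := hΔ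
  apply Uq_algHom_ext hp
  · simp [hE, hK, TensorProduct.add_tmul, TensorProduct.tmul_add, Algebra.TensorProduct.one_def,
      add_assoc]
  · simp [hF, hKinv, TensorProduct.add_tmul, TensorProduct.tmul_add,
      Algebra.TensorProduct.one_def, add_assoc]
  · simp [hK]

lemma IsCoprod.conv_assoc {Δ : Uq p →ₐ[ℂ] (Uq p ⊗[ℂ] Uq p)} (hp : 2 ≤ p) (hΔ : IsCoprod p Δ)
    (φ ψ χ : Uq p →ₗ[ℂ] ℂ) : conv p Δ (conv p Δ φ ψ) χ = conv p Δ φ (conv p Δ ψ χ) := by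
  have assoc_mul : LinearMap.mul' ℂ ℂ ∘ₗ
      TensorProduct.map (LinearMap.mul' ℂ ℂ ∘ₗ TensorProduct.map φ ψ) χ =
      (LinearMap.mul' ℂ ℂ ∘ₗ
        TensorProduct.map φ (LinearMap.mul' ℂ ℂ ∘ₗ TensorProduct.map ψ χ)) ∘ₗ
        (TensorProduct.assoc ℂ (Uq p) (Uq p) (Uq p)).toLinearMap :=
    TensorProduct.ext_threefold fun x y z ↦ by simp [mul_assoc]
  ext x
  have left (w : Uq p ⊗[ℂ] Uq p) : TensorProduct.map (conv p Δ φ ψ) χ w =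
      TensorProduct.map (LinearMap.mul' ℂ ℂ ∘ₗ TensorProduct.map φ ψ) χ
        (Algebra.TensorProduct.map Δ (AlgHom.id ℂ (Uq p)) w) :=
    LinearMap.congr_fun (TensorProduct.map_comp (LinearMap.mul' ℂ ℂ ∘ₗ TensorProduct.map φ ψ) χ
      Δ.toLinearMap LinearMap.id) w
  have right (w : Uq p ⊗[ℂ] Uq p) : TensorProduct.map φ (conv p Δ ψ χ) w =
      TensorProduct.map φ (LinearMap.mul' ℂ ℂ ∘ₗ TensorProduct.map ψ χ)
        (Algebra.TensorProduct.map (AlgHom.id ℂ (Uq p)) Δ w) :=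
    LinearMap.congr_fun (TensorProduct.map_comp φ (LinearMap.mul' ℂ ℂ ∘ₗ TensorProduct.map ψ χ)
      LinearMap.id Δ.toLinearMap) w
  change LinearMap.mul' ℂ ℂ (TensorProduct.map (conv p Δ φ ψ) χ (Δ x)) =
    LinearMap.mul' ℂ ℂ (TensorProduct.map φ (conv p Δ ψ χ) (Δ x))
  rw [left, right, ← AlgHom.comp_apply _ Δ x, ← AlgHom.comp_apply _ Δ x, ← hΔ.coassoc hp]
  exact LinearMap.congr_fun assoc_mul _

variable {n : Type} [Fintype n] [DecidableEq n] (ρ : Uq p →ₐ[ℂ] Matrix n n ℂ)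

/-- The homomorphism `x ↦ ∑ x' ρ(x'')` into matrices over `Ū_q`; right convolution by the character
of `ρ` is evaluation on its trace. -/
def comatrix : Uq p →ₐ[ℂ] Matrix n n (Uq p) :=
  (matrixEquivTensor n ℂ (Uq p)).symm.toAlgHom.comp
    ((Algebra.TensorProduct.map (AlgHom.id ℂ (Uq p)) ρ).comp Δ)

lemma conv_chiOf_apply (φ : Uq p →ₗ[ℂ] ℂ) (x : Uq p) :
    conv p Δ φ (chiOf p ρ) x = φ (comatrix Δ ρ x).trace := by
  suffices h : LinearMap.mul' ℂ ℂ ∘ₗ TensorProduct.map φ (chiOf p ρ) =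
      φ ∘ₗ Matrix.traceLinearMap n ℂ (Uq p) ∘ₗ
        (matrixEquivTensor n ℂ (Uq p)).symm.toLinearMap ∘ₗ
        TensorProduct.map LinearMap.id ρ.toLinearMap from LinearMap.congr_fun h (Δ x)
  refine TensorProduct.ext' fun a b ↦ ?_
  change φ a * (ρ b).trace = φ ((matrixEquivTensor n ℂ (Uq p)).symm (a ⊗ₜ[ℂ] ρ b)).trace
  simp only [Matrix.trace, Matrix.diag_apply, matrixEquivTensor_symm_tmul_apply, ← Finset.sum_smul,
    map_smul, smul_eq_mul, mul_comm]

lemma isSLF_conv_chiOf {φ : Uq p →ₗ[ℂ] ℂ} (hφ : IsSLF p φ) :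
    IsSLF p (conv p Δ φ (chiOf p ρ)) := fun x y ↦ by
  rw [conv_chiOf_apply, conv_chiOf_apply, map_mul, map_mul, hφ.trace_mul_comm]

variable {Δ} (hΔ : IsCoprod p Δ) (i j : n)

include hΔ

lemma comatrix_EE_apply :
    comatrix Δ ρ (EE p) i j = ρ (EE p) i j • 1 + ρ (KK p) i j • EE p := by
  simp [comatrix, hΔ.1, -matrixEquivTensor_apply_symm, matrixEquivTensor_symm_tmul_apply]

lemma comatrix_FF_apply :
    comatrix Δ ρ (FF p) i j = (1 : Matrix n n ℂ) i j • FF p + ρ (FF p) i j • KKinv p := by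
  simp [comatrix, hΔ.2.1, -matrixEquivTensor_apply_symm, matrixEquivTensor_symm_tmul_apply]

lemma comatrix_KK_apply : comatrix Δ ρ (KK p) i j = ρ (KK p) i j • KK p := by
  simp [comatrix, hΔ.2.2.1, -matrixEquivTensor_apply_symm, matrixEquivTensor_symm_tmul_apply]

lemma comatrix_KKinv_apply : comatrix Δ ρ (KKinv p) i j = ρ (KKinv p) i j • KKinv p := by
  simp [comatrix, hΔ.2.2.2, -matrixEquivTensor_apply_symm, matrixEquivTensor_symm_tmul_apply]

lemma conv_chiOf_trivial (hp : 2 ≤ p) {ρ : Uq p →ₐ[ℂ] Matrix (Fin 1) (Fin 1) ℂ}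
    (hE : ρ (EE p) = 0) (hF : ρ (FF p) = 0) (hK : ρ (KK p) = 1) (φ : Uq p →ₗ[ℂ] ℂ) :
    conv p Δ φ (chiOf p ρ) = φ := by
  have entry_eq (x : Uq p) : comatrix Δ ρ x 0 0 = x := by
    induction x using Uq_induction hp with
    | E => rw [comatrix_EE_apply ρ hΔ, hE, hK]; simp
    | F => rw [comatrix_FF_apply ρ hΔ, hF]; simp
    | K => rw [comatrix_KK_apply ρ hΔ, hK]; simp
    | algebraMap c => rw [AlgHom.commutes, Matrix.algebraMap_matrix_apply, if_pos rfl]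
    | add x y hx hy => rw [map_add, Matrix.add_apply, hx, hy]
    | mul x y hx hy => rw [map_mul, Matrix.mul_apply, Fin.sum_univ_one, hx, hy]
  ext x
  rw [conv_chiOf_apply, Matrix.trace_fin_one, entry_eq]

end Convolution

lemma liftAlgHom_gen {p : ℕ} {A : Type*} [Semiring A] [Algebra ℂ A] {g : gen → A}
    (h : ∀ ⦃x y⦄, rel p x y → FreeAlgebra.lift ℂ g x = FreeAlgebra.lift ℂ g y) (i : gen) :
    RingQuot.liftAlgHom ℂ ⟨FreeAlgebra.lift ℂ g, h⟩
      (RingQuot.mkAlgHom ℂ (rel p) (FreeAlgebra.ι ℂ i)) = g i := by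
  rw [RingQuot.liftAlgHom_mkAlgHom_apply, FreeAlgebra.lift_ι_apply]

section CartanInvolution

variable (p : ℕ)

/-- The images of the generators under the Cartan involution. -/
def cartanInvolutionGen : gen → Uq p
  | .E => FF p
  | .F => EE p
  | .K => KKinv p
  | .Kinv => KK p

lemma cartanInvolutionGen_rel ⦃x y : FreeAlgebra ℂ gen⦄ (h : rel p x y) :
    FreeAlgebra.lift ℂ (cartanInvolutionGen p) x =
      FreeAlgebra.lift ℂ (cartanInvolutionGen p) y := by
  cases h <;> simp only [map_mul, map_pow, map_sub, map_smul, map_one, map_zero,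
    FreeAlgebra.lift_ι_apply, cartanInvolutionGen]
  case KKinv => exact KKinv_mul_KK p
  case KinvK => exact KK_mul_KKinv p
  case Ep => exact FF_pow_self p
  case Fp => exact EE_pow_self p
  case K2p =>
    have hcomm : Commute (KKinv p) (KK p) := (KKinv_mul_KK p).trans (KK_mul_KKinv p).symm
    calc KKinv p ^ (2 * p) = KKinv p ^ (2 * p) * KK p ^ (2 * p) := by
          rw [KK_pow_two_mul, mul_one]
      _ = 1 := by rw [← hcomm.mul_pow, KKinv_mul_KK, one_pow]
  case KE => exact KKinv_mul_FF p
  case KF => exact KKinv_mul_EE p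
  case EF => rw [← neg_sub, EE_mul_FF_sub, qDiff, ← neg_sub (KK p), smul_neg]

/-- The Cartan involution `E ↔ F`, `K ↔ K⁻¹`: an algebra automorphism reversing the
comultiplication. -/
def cartanInvolution : Uq p →ₐ[ℂ] Uq p :=
  RingQuot.liftAlgHom ℂ ⟨FreeAlgebra.lift ℂ (cartanInvolutionGen p), cartanInvolutionGen_rel p⟩

lemma cartanInvolution_EE : cartanInvolution p (EE p) = FF p := liftAlgHom_gen _ .E
lemma cartanInvolution_FF : cartanInvolution p (FF p) = EE p := liftAlgHom_gen _ .F
lemma cartanInvolution_KK : cartanInvolution p (KK p) = KKinv p := liftAlgHom_gen _ .K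
lemma cartanInvolution_KKinv : cartanInvolution p (KKinv p) = KK p := liftAlgHom_gen _ .Kinv

variable {p} (hp : 2 ≤ p)
include hp

lemma cartanInvolution_casimir : cartanInvolution p (casimir p) = casimir p := by
  nth_rewrite 1 [casimir_eq_EE_mul_FF hp]
  rw [casimir]
  simp only [map_add, map_smul, map_mul, cartanInvolution_EE, cartanInvolution_FF,
    cartanInvolution_KK, cartanInvolution_KKinv]
  abel

lemma cartanInvolution_KK_pow (c : ℕ) :
    cartanInvolution p (KK p ^ c) = KK p ^ ((2 * p - 1) * c) := by
  rw [map_pow, cartanInvolution_KK, KKinv_eq_pow hp, pow_mul]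

lemma conv_comp_cartanInvolution {Δ : Uq p →ₐ[ℂ] (Uq p ⊗[ℂ] Uq p)} (hΔ : IsCoprod p Δ)
    (φ ψ : Uq p →ₗ[ℂ] ℂ) :
    conv p Δ φ ψ ∘ₗ (cartanInvolution p).toLinearMap =
      conv p Δ (ψ ∘ₗ (cartanInvolution p).toLinearMap)
        (φ ∘ₗ (cartanInvolution p).toLinearMap) := by
  set ω := cartanInvolution p
  have flip : Δ.comp ω = (Algebra.TensorProduct.comm ℂ (Uq p) (Uq p)).toAlgHom.comp
      ((Algebra.TensorProduct.map ω ω).comp Δ) := by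
    obtain ⟨hE, hF, hK, hKinv⟩ := hΔ
    apply Uq_algHom_ext hp
    · simp [ω, hE, hF, cartanInvolution_EE, cartanInvolution_KK, add_comm]
    · simp [ω, hE, hF, cartanInvolution_FF, cartanInvolution_KKinv, add_comm]
    · simp [ω, hK, hKinv, cartanInvolution_KK]
  have mul_comm' : (LinearMap.mul' ℂ ℂ ∘ₗ TensorProduct.map φ ψ) ∘ₗ
      (TensorProduct.comm ℂ (Uq p) (Uq p)).toLinearMap ∘ₗ
        TensorProduct.map ω.toLinearMap ω.toLinearMap =
      LinearMap.mul' ℂ ℂ ∘ₗ TensorProduct.map (ψ ∘ₗ ω.toLinearMap) (φ ∘ₗ ω.toLinearMap) :=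
    TensorProduct.ext' fun x y ↦ by simp [mul_comm]
  ext x
  change LinearMap.mul' ℂ ℂ (TensorProduct.map φ ψ (Δ.comp ω x)) = _
  rw [flip]
  exact LinearMap.congr_fun mul_comm' (Δ x)

end CartanInvolution

lemma IsCoprod.conv_eq_conv_swap_comp {p : ℕ} (hp : 2 ≤ p) {Δ : Uq p →ₐ[ℂ] (Uq p ⊗[ℂ] Uq p)}
    (hΔ : IsCoprod p Δ) {φ ψ : Uq p →ₗ[ℂ] ℂ} (hφ : φ ∘ₗ (cartanInvolution p).toLinearMap = φ)
    (hψ : ψ ∘ₗ (cartanInvolution p).toLinearMap = ψ) :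
    conv p Δ φ ψ = conv p Δ ψ φ ∘ₗ (cartanInvolution p).toLinearMap := by
  rw [conv_comp_cartanInvolution hp hΔ, hφ, hψ]

lemma IsSLF.comp_cartanInvolution {p : ℕ} {φ : Uq p →ₗ[ℂ] ℂ} (hφ : IsSLF p φ) :
    IsSLF p (φ ∘ₗ (cartanInvolution p).toLinearMap) := fun x y ↦ by
  simp only [LinearMap.comp_apply, AlgHom.toLinearMap_apply, map_mul, hφ (cartanInvolution p x)]

/-! ### Highest weight modules -/

lemma pow_apply_eq_zero_of_strictUpper {R : Type*} [Semiring R] {n : ℕ}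
    {M : Matrix (Fin n) (Fin n) R} (hM : ∀ i j, j ≤ i → M i j = 0) (k : ℕ) {i j : Fin n}
    (hij : (j : ℕ) < i + k) : (M ^ k) i j = 0 := by
  induction k generalizing j with
  | zero => exact Matrix.one_apply_ne (by omega)
  | succ k ih =>
    rw [pow_succ, Matrix.mul_apply]
    refine Finset.sum_eq_zero fun m _ ↦ ?_
    rcases lt_or_ge (m : ℕ) (i + k) with hm | hm
    · rw [ih hm, zero_mul]
    · rw [hM m j (by omega), mul_zero]

lemma pow_card_eq_zero_of_strictUpper {R : Type*} [Semiring R] {n : ℕ}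
    {M : Matrix (Fin n) (Fin n) R} (hM : ∀ i j, j ≤ i → M i j = 0) : M ^ n = 0 :=
  Matrix.ext fun i j ↦ pow_apply_eq_zero_of_strictUpper hM n (by omega)

lemma isUnit_of_upperTriangular {R : Type*} [Ring R] {n : ℕ} {M : Matrix (Fin n) (Fin n) R}
    (hM : ∀ i j, j < i → M i j = 0) (hdiag : ∀ i, IsUnit (M i i)) : IsUnit M := by
  choose u hu using hdiag
  have hD : IsUnit (Matrix.diagonal fun i ↦ M i i) :=
    (Pi.isUnit_iff.mpr fun i ↦ (hu i) ▸ (u i).isUnit :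
      IsUnit fun i ↦ M i i).map (Matrix.diagonalRingHom (Fin n) R)
  set N : Matrix (Fin n) (Fin n) R := Matrix.of fun i j ↦ if i < j then ↑(u i)⁻¹ * M i j else 0
  have hN : N ^ n = 0 := pow_card_eq_zero_of_strictUpper fun i j hij ↦ if_neg hij.not_gt
  have hMN : M = (Matrix.diagonal fun i ↦ M i i) * (1 + N) := by
    ext i j
    rw [Matrix.diagonal_mul, Matrix.add_apply, ← hu i,
      show N i j = if i < j then ↑(u i)⁻¹ * M i j else 0 from rfl]
    rcases lt_trichotomy i j with hij | rfl | hij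
    · rw [Matrix.one_apply_ne hij.ne, if_pos hij, zero_add, Units.mul_inv_cancel_left]
    · rw [Matrix.one_apply_eq, if_neg (lt_irrefl i), add_zero, mul_one, hu]
    · rw [Matrix.one_apply_ne hij.ne', if_neg hij.not_gt, hM i j hij, add_zero, mul_zero]
  rw [hMN]
  exact hD.mul (IsNilpotent.isUnit_one_add ⟨n, hN⟩)

/-- The matrix of a raising operator `v_j ↦ c j • v_{j-1}`, the counterpart of the lowering
operator `XF`. -/
def raising (n : ℕ) (c : ℕ → ℂ) : Matrix (Fin n) (Fin n) ℂ :=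
  Matrix.of fun i j ↦ if (i : ℕ) + 1 = j then c j else 0

lemma XF_mul_raising {n : ℕ} {c : ℕ → ℂ} (hc : c 0 = 0) :
    XF n * raising n c = Matrix.diagonal fun i : Fin n ↦ c i := by
  ext i j
  simp only [Matrix.mul_apply, XF, raising, Matrix.of_apply, Matrix.diagonal_apply, ite_mul,
    one_mul, zero_mul]
  obtain ⟨_ | i, hi⟩ := i
  · simp [hc]
  · rw [Fintype.sum_eq_single ⟨i, by omega⟩ (by
      rintro ⟨m, hm⟩ h
      exact if_neg (by simpa [eq_comm, Fin.ext_iff] using h))]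
    simp only [Fin.ext_iff, if_true]
    split_ifs with h <;> simp [h]

lemma raising_mul_XF {n : ℕ} {c : ℕ → ℂ} (hc : c n = 0) :
    raising n c * XF n = Matrix.diagonal fun i : Fin n ↦ c (i + 1) := by
  ext i j
  simp only [Matrix.mul_apply, XF, raising, Matrix.of_apply, Matrix.diagonal_apply, mul_ite,
    mul_one, mul_zero]
  rcases Nat.lt_or_ge (i + 1) n with hi | hi
  · rw [Fintype.sum_eq_single ⟨i + 1, hi⟩ (by
      rintro ⟨m, hm⟩ h
      simp only [ne_eq, Fin.mk.injEq] at h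
      simp [Ne.symm h])]
    simp [Fin.ext_iff]
  · rw [show (i : ℕ) + 1 = n by omega, hc, ite_self]
    refine Finset.sum_eq_zero fun m _ ↦ ?_
    rw [if_neg (by omega : ¬n = (m : ℕ)), ite_self]

/-- The weight `l q^{-2i}` of the `i`-th basis vector in a module of highest weight `l`. -/
def hwWeight (p : ℕ) (l : ℂ) (i : ℕ) : ℂ := l * (q p ^ (2 * i))⁻¹

/-- The coefficient of `E v_j = c_j v_{j-1}` in a module of highest weight `l`, forced by the
Casimir element acting by the scalar `q l + (q l)⁻¹`. -/
def hwCoeff (p : ℕ) (l : ℂ) (j : ℕ) : ℂ :=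
  (qDiff p ^ 2)⁻¹ *
    (q p * l + (q p * l)⁻¹ - q p * hwWeight p l j - (q p * hwWeight p l j)⁻¹)

lemma hwWeight_zero (p : ℕ) (l : ℂ) : hwWeight p l 0 = l := by simp [hwWeight]

lemma hwWeight_succ (p : ℕ) (l : ℂ) (i : ℕ) :
    hwWeight p l (i + 1) = (q p ^ 2)⁻¹ * hwWeight p l i := by
  rw [hwWeight, hwWeight, mul_add, pow_add, mul_inv]
  ring

lemma hwWeight_ne_zero (p : ℕ) {l : ℂ} (hl : l ≠ 0) (i : ℕ) : hwWeight p l i ≠ 0 :=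
  mul_ne_zero hl (inv_ne_zero (pow_ne_zero _ (q_ne_zero p)))

lemma hwCoeff_zero (p : ℕ) (l : ℂ) : hwCoeff p l 0 = 0 := by
  rw [hwCoeff, hwWeight_zero]
  ring

lemma hwCoeff_self {p : ℕ} (hp : 2 ≤ p) (l : ℂ) : hwCoeff p l p = 0 := by
  rw [hwCoeff, hwWeight, (q_isPrimitiveRoot hp).pow_eq_one, inv_one, mul_one]
  ring

lemma hwCoeff_succ_sub {p : ℕ} (hp : 2 ≤ p) {l : ℂ} (hl : l ≠ 0) (i : ℕ) :
    hwCoeff p l (i + 1) - hwCoeff p l i =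
      (qDiff p)⁻¹ * (hwWeight p l i - (hwWeight p l i)⁻¹) := by
  have hq := q_ne_zero p
  have hd := qDiff_ne_zero hp
  have hw := hwWeight_ne_zero p hl i
  rw [hwCoeff, hwCoeff, hwWeight_succ]
  field_simp
  rw [qDiff]
  field_simp
  ring

/-- `ρ` is the cyclic module `v_0, F v_0, …, F^{n-1} v_0` over a vector `v_0` of highest weight
`l`. -/
structure IsHighestWeightRep {p n : ℕ} (ρ : Uq p →ₐ[ℂ] Matrix (Fin n) (Fin n) ℂ) (l : ℂ) :
    Prop where
  map_EE : ρ (EE p) = raising n (hwCoeff p l)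
  map_FF : ρ (FF p) = XF n
  map_KK : ρ (KK p) = Matrix.diagonal fun i : Fin n ↦ hwWeight p l i

lemma map_KKinv_of_map_KK_eq_diagonal {p : ℕ} {n : Type*} [Fintype n] [DecidableEq n]
    {ρ : Uq p →ₐ[ℂ] Matrix n n ℂ} {k : n → ℂ} (hk : ∀ i, k i ≠ 0)
    (hK : ρ (KK p) = Matrix.diagonal k) : ρ (KKinv p) = Matrix.diagonal fun i ↦ (k i)⁻¹ := by
  refine left_inv_eq_right_inv (a := ρ (KK p)) ?_ ?_
  · rw [← map_mul, KKinv_mul_KK, map_one]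
  · rw [hK, Matrix.diagonal_mul_diagonal]
    simp only [mul_inv_cancel₀ (hk _), Matrix.diagonal_one]

namespace IsHighestWeightRep

variable {p n : ℕ} {ρ : Uq p →ₐ[ℂ] Matrix (Fin n) (Fin n) ℂ} {l : ℂ}

lemma map_KKinv (hρ : IsHighestWeightRep ρ l) (hl : l ≠ 0) :
    ρ (KKinv p) = Matrix.diagonal fun i : Fin n ↦ (hwWeight p l i)⁻¹ :=
  map_KKinv_of_map_KK_eq_diagonal (fun _ ↦ hwWeight_ne_zero p hl _) hρ.map_KK

lemma map_casimir (hp : 2 ≤ p) (hρ : IsHighestWeightRep ρ l) (hl : l ≠ 0) :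
    ρ (casimir p) = (q p * l + (q p * l)⁻¹) • 1 := by
  have hd := qDiff_ne_zero hp
  rw [casimir, map_add, map_add, map_smul, map_smul, map_smul, map_mul, hρ.map_FF, hρ.map_EE,
    XF_mul_raising (hwCoeff_zero p l), hρ.map_KK, hρ.map_KKinv hl, ← Matrix.diagonal_smul,
    ← Matrix.diagonal_smul, ← Matrix.diagonal_smul, Matrix.diagonal_add, Matrix.diagonal_add,
    Matrix.smul_one_eq_diagonal]
  congr 1
  ext i
  simp only [Pi.smul_apply, smul_eq_mul, hwCoeff]
  rw [mul_inv_cancel_left₀ (pow_ne_zero 2 hd), mul_inv (q p) (hwWeight p l i)]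
  ring

lemma chiOf_casimir_mul (hp : 2 ≤ p) (hρ : IsHighestWeightRep ρ l) (hl : l ≠ 0) (x : Uq p) :
    chiOf p ρ (casimir p * x) = (q p * l + (q p * l)⁻¹) * chiOf p ρ x := by
  change (ρ (casimir p * x)).trace = _ * (ρ x).trace
  rw [map_mul, hρ.map_casimir hp hl, smul_one_mul, Matrix.trace_smul, smul_eq_mul]

lemma chiOf_KK_pow (hρ : IsHighestWeightRep ρ l) (c : ℕ) :
    chiOf p ρ (KK p ^ c) = ∑ i ∈ Finset.range n, hwWeight p l i ^ c := by
  change (ρ (KK p ^ c)).trace = _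
  rw [map_pow, hρ.map_KK, Matrix.diagonal_pow, Matrix.trace_diagonal,
    ← Fin.sum_univ_eq_sum_range (fun i ↦ hwWeight p l i ^ c)]
  rfl

end IsHighestWeightRep

section Verma

variable (p : ℕ)

/-- The matrices of the generators on the Verma module of highest weight `l`. -/
def vermaGen (l : ℂ) : gen → Matrix (Fin p) (Fin p) ℂ
  | .E => raising p (hwCoeff p l)
  | .F => XF p
  | .K => Matrix.diagonal fun i : Fin p ↦ hwWeight p l i
  | .Kinv => Matrix.diagonal fun i : Fin p ↦ (hwWeight p l i)⁻¹

variable {p} (hp : 2 ≤ p) {l : ℂ} (hl : l ^ (2 * p) = 1)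

include hp hl

lemma ne_zero_of_pow_two_mul_eq_one : l ≠ 0 := by
  rintro rfl
  exact zero_ne_one ((zero_pow (by omega)).symm.trans hl)

lemma hwWeight_pow_two_mul (i : ℕ) : hwWeight p l i ^ (2 * p) = 1 := by
  rw [hwWeight, mul_pow, hl, inv_pow, pow_right_comm, (q_isPrimitiveRoot hp).pow_eq_one, one_pow,
    inv_one, one_mul]

lemma vermaGen_rel ⦃x y : FreeAlgebra ℂ gen⦄ (h : rel p x y) :
    FreeAlgebra.lift ℂ (vermaGen p l) x = FreeAlgebra.lift ℂ (vermaGen p l) y := by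
  have hl₀ := ne_zero_of_pow_two_mul_eq_one hp hl
  have hw := hwWeight_ne_zero p hl₀
  have hq := q_ne_zero p
  cases h <;> simp only [map_mul, map_pow, map_sub, map_smul, map_one, map_zero,
    FreeAlgebra.lift_ι_apply, vermaGen]
  case KKinv =>
    simp only [Matrix.diagonal_mul_diagonal, mul_inv_cancel₀ (hw _), Matrix.diagonal_one]
  case KinvK =>
    simp only [Matrix.diagonal_mul_diagonal, inv_mul_cancel₀ (hw _), Matrix.diagonal_one]
  case Ep => exact pow_card_eq_zero_of_strictUpper fun i j hij ↦ if_neg (by omega)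
  case Fp =>
    rw [← Matrix.transpose_eq_zero, Matrix.transpose_pow]
    exact pow_card_eq_zero_of_strictUpper fun i j hij ↦ if_neg (by omega)
  case K2p =>
    rw [Matrix.diagonal_pow, ← Matrix.diagonal_one]
    exact congrArg _ (funext fun i ↦ hwWeight_pow_two_mul hp hl i)
  case KE =>
    ext i j
    rw [Matrix.diagonal_mul, Matrix.smul_apply, Matrix.mul_diagonal, raising, Matrix.of_apply]
    split_ifs with h
    · rw [← h, hwWeight_succ, smul_eq_mul]
      field_simp
    · simp
  case KF =>
    ext i j
    rw [Matrix.diagonal_mul, Matrix.smul_apply, Matrix.mul_diagonal, XF, Matrix.of_apply]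
    split_ifs with h
    · rw [h, hwWeight_succ, smul_eq_mul]
      ring
    · simp
  case EF =>
    rw [raising_mul_XF (hwCoeff_self hp l), XF_mul_raising (hwCoeff_zero p l), Matrix.diagonal_sub,
      Matrix.diagonal_sub, ← Matrix.diagonal_smul]
    exact congrArg _ (funext fun i ↦ hwCoeff_succ_sub hp hl₀ i)

/-- The Verma module of `Ū_q`, of dimension `p` and highest weight a `2p`-th root of unity `l`. -/
def verma : Uq p →ₐ[ℂ] Matrix (Fin p) (Fin p) ℂ :=
  RingQuot.liftAlgHom ℂ ⟨FreeAlgebra.lift ℂ (vermaGen p l), vermaGen_rel hp hl⟩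

lemma isHighestWeightRep_verma : IsHighestWeightRep (verma hp hl) l where
  map_EE := liftAlgHom_gen (vermaGen_rel hp hl) .E
  map_FF := liftAlgHom_gen (vermaGen_rel hp hl) .F
  map_KK := liftAlgHom_gen (vermaGen_rel hp hl) .K

end Verma

lemma q_mul_zpow_sub_one (p : ℕ) (α : ℂ) (s : ℤ) : q p * (α * q p ^ (s - 1)) = α * q p ^ s := by
  rw [mul_left_comm, ← zpow_one_add₀ (q_ne_zero p), add_sub_cancel]

lemma IsXRep.isHighestWeightRep {p : ℕ} (hp : 2 ≤ p)
    {ρX : (α : ℂ) → (s : ℕ) → (Uq p →ₐ[ℂ] Matrix (Fin s) (Fin s) ℂ)} (hX : IsXRep p ρX) {α : ℂ}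
    (hα : α = 1 ∨ α = -1) {s : ℕ} (hsp : s ≤ p) :
    IsHighestWeightRep (ρX α s) (α * q p ^ ((s : ℤ) - 1)) := by
  rcases s.eq_zero_or_pos with rfl | hs
  · exact ⟨Subsingleton.elim _ _, Subsingleton.elim _ _, Subsingleton.elim _ _⟩
  have hq := q_ne_zero p
  have hd := qDiff_ne_zero hp
  have weight_eq (i : ℕ) : hwWeight p (α * q p ^ ((s : ℤ) - 1)) i =
      α * q p ^ ((s : ℤ) - 1 - 2 * i) := by
    rw [hwWeight, zpow_sub₀ hq _ (2 * (i : ℤ)), mul_div_assoc', div_eq_mul_inv]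
    norm_cast
  obtain ⟨hK, hE, hF⟩ := hX α hα s hs hsp
  refine ⟨?_, hF, ?_⟩
  · rw [hE]
    ext i j
    rw [XE, raising, Matrix.of_apply, Matrix.of_apply]
    refine if_congr Iff.rfl ?_ rfl
    have hα' : α⁻¹ = α := by rcases hα with rfl | rfl <;> norm_num
    rw [hwCoeff, weight_eq, sub_right_comm (s : ℤ) 1, q_mul_zpow_sub_one, q_mul_zpow_sub_one,
      mul_inv α, mul_inv α, hα', eq_inv_mul_iff_mul_eq₀ (pow_ne_zero 2 hd)]
    calc qDiff p ^ 2 * (α * qi p j * qi p (s - j))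
        = α * (qi p j * qDiff p) * (qi p (s - j) * qDiff p) := by ring
      _ = _ := by
        rw [qi_mul_qDiff hp, qi_mul_qDiff hp, zpow_sub₀ hq, zpow_sub₀ hq, two_mul, zpow_add₀ hq]
        field_simp
        ring
  · rw [hK, XK]
    exact congrArg _ (funext fun i ↦ (weight_eq i).symm)

/-! ### Convolution with Verma characters -/

/-- The coefficient `(q - q^{1-2j}) k + (q⁻¹ - q^{2j-1}) k'` over `(q - q⁻¹)²` that `E` picks up
when it is moved past `F^j`, with `k` and `k'` the actions of `K` and `K⁻¹`. -/
def raiseCoeff (p : ℕ) {A : Type*} [AddCommGroup A] [Module ℂ A] (k k' : A) (j : ℕ) : A :=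
  (qDiff p ^ 2)⁻¹ • ((q p * (1 - (q p ^ (2 * j))⁻¹)) • k + ((q p)⁻¹ * (1 - q p ^ (2 * j))) • k')

lemma map_raiseCoeff (p : ℕ) {A B : Type*} [AddCommGroup A] [Module ℂ A] [AddCommGroup B]
    [Module ℂ B] (f : A →ₗ[ℂ] B) (k k' : A) (j : ℕ) :
    f (raiseCoeff p k k' j) = raiseCoeff p (f k) (f k') j := by
  rw [raiseCoeff, raiseCoeff, map_smul, map_add, map_smul, map_smul]

lemma raiseCoeff_inv (p : ℕ) (l : ℂ) (j : ℕ) : raiseCoeff p l l⁻¹ j = hwCoeff p l j := by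
  rw [raiseCoeff, hwCoeff, hwWeight]
  simp only [smul_eq_mul, mul_inv, inv_inv]
  ring

lemma EE_mul_FF_pow_succ {p : ℕ} (hp : 2 ≤ p) (i : ℕ) :
    EE p * FF p ^ (i + 1) =
      FF p ^ (i + 1) * EE p + FF p ^ i * raiseCoeff p (KK p) (KKinv p) (i + 1) := by
  have hd := qDiff_ne_zero hp
  have hq := q_ne_zero p
  have hK : KK p * FF p ^ i = (q p ^ (2 * i))⁻¹ • (FF p ^ i * KK p) := by
    simpa [← pow_mul] using pow_mul_pow_of_mul_eq_smul (KK_mul_FF p) 1 i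
  have hKinv : KKinv p * FF p ^ i = q p ^ (2 * i) • (FF p ^ i * KKinv p) := by
    simpa [← pow_mul] using pow_mul_pow_of_mul_eq_smul (KKinv_mul_FF p) 1 i
  rw [pow_succ', ← mul_assoc, EE_mul_FF hp, smul_mul_assoc, sub_mul, sub_mul,
    ((casimir_commute hp (FF p)).pow_right i).eq, smul_mul_assoc, smul_mul_assoc, hK, hKinv,
    casimir, ← pow_succ' (FF p) i, pow_succ (FF p) i, mul_assoc (FF p ^ i), raiseCoeff]
  simp only [mul_add, mul_smul_comm, pow_succ, mul_inv]
  match_scalars <;> field_simp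

section LoweringBasis

variable {p n : ℕ} {Δ : Uq p →ₐ[ℂ] (Uq p ⊗[ℂ] Uq p)} (hΔ : IsCoprod p Δ) {l : ℂ}
  {ρ : Uq p →ₐ[ℂ] Matrix (Fin n) (Fin n) ℂ} (hρ : IsHighestWeightRep ρ l) {o : Fin n}
  (ho : (o : ℕ) = 0)

include hΔ hρ ho

lemma comatrix_mul_EE_apply (y : Uq p) (k : Fin n) :
    comatrix Δ ρ (y * EE p) k o = comatrix Δ ρ y k o * (l • EE p) := by
  rw [map_mul, Matrix.mul_apply, Fintype.sum_eq_single o fun m hm ↦ ?_]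
  · simp [comatrix_EE_apply ρ hΔ, hρ.map_EE, hρ.map_KK, raising, ho, hwWeight_zero]
  · simp [comatrix_EE_apply ρ hΔ, hρ.map_EE, hρ.map_KK, raising, ho, hm]

lemma comatrix_mul_KK_apply (y : Uq p) (k : Fin n) :
    comatrix Δ ρ (y * KK p) k o = comatrix Δ ρ y k o * (l • KK p) := by
  rw [map_mul, Matrix.mul_apply, Fintype.sum_eq_single o fun m hm ↦ ?_]
  · rw [comatrix_KK_apply ρ hΔ, hρ.map_KK, Matrix.diagonal_apply_eq, ho, hwWeight_zero]
  · rw [comatrix_KK_apply ρ hΔ, hρ.map_KK, Matrix.diagonal_apply_ne _ hm, zero_smul, mul_zero]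

lemma comatrix_mul_KKinv_apply (hl : l ≠ 0) (y : Uq p) (k : Fin n) :
    comatrix Δ ρ (y * KKinv p) k o = comatrix Δ ρ y k o * (l⁻¹ • KKinv p) := by
  rw [map_mul, Matrix.mul_apply, Fintype.sum_eq_single o fun m hm ↦ ?_]
  · rw [comatrix_KKinv_apply ρ hΔ, hρ.map_KKinv hl, Matrix.diagonal_apply_eq, ho, hwWeight_zero]
  · rw [comatrix_KKinv_apply ρ hΔ, hρ.map_KKinv hl, Matrix.diagonal_apply_ne _ hm, zero_smul,
      mul_zero]

lemma comatrix_FF_pow_apply_of_lt {i : ℕ} {k : Fin n} (hk : i < k) :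
    comatrix Δ ρ (FF p ^ i) k o = 0 := by
  induction i generalizing k with
  | zero => rw [pow_zero, map_one, Matrix.one_apply_ne (by omega)]
  | succ i ih =>
    rw [pow_succ', map_mul, Matrix.mul_apply]
    refine Finset.sum_eq_zero fun m _ ↦ ?_
    rw [comatrix_FF_apply ρ hΔ, hρ.map_FF, XF, Matrix.of_apply]
    rcases lt_or_ge i (m : ℕ) with hm | hm
    · rw [ih hm, mul_zero]
    · rw [Matrix.one_apply_ne (by omega), if_neg (by omega), zero_smul, zero_smul, add_zero,
        zero_mul]

lemma comatrix_FF_pow_apply_self (i : Fin n) :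
    comatrix Δ ρ (FF p ^ (i : ℕ)) i o = KKinv p ^ (i : ℕ) := by
  obtain ⟨i, hi⟩ := i
  induction i with
  | zero =>
    obtain rfl : o = ⟨0, hi⟩ := Fin.ext ho
    rw [pow_zero, pow_zero, map_one, Matrix.one_apply_eq]
  | succ i ih =>
    rw [pow_succ', map_mul, Matrix.mul_apply,
      Fintype.sum_eq_single (⟨i, by omega⟩ : Fin n) fun m hm ↦ ?_]
    · rw [ih, comatrix_FF_apply ρ hΔ, hρ.map_FF, XF, Matrix.of_apply, if_pos rfl,
        Matrix.one_apply_ne (by simp), zero_smul, zero_add, one_smul, ← pow_succ']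
    · rcases lt_or_ge i (m : ℕ) with him | him
      · rw [comatrix_FF_pow_apply_of_lt hΔ hρ ho him, mul_zero]
      · have hmi : (m : ℕ) ≠ i := fun h ↦ hm (Fin.ext h)
        rw [comatrix_FF_apply ρ hΔ, hρ.map_FF, XF, Matrix.of_apply,
          if_neg (by simpa using hmi.symm), Matrix.one_apply_ne (by simp [Fin.ext_iff]; omega),
          zero_smul, zero_smul, add_zero, zero_mul]

end LoweringBasis

section BorelPairs

variable {p : ℕ} {ι : Type*} {κ : ι → ℂ}

/-- The graph of the characters `E ↦ 0`, `K ↦ κ m` of the Borel subalgebra generated by `E` and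
`K`: working with pairs avoids having to know that these characters are well defined. -/
def borelPairs (p : ℕ) {ι : Type*} (κ : ι → ℂ) : Subalgebra ℂ (Uq p × (ι → ℂ)) :=
  Algebra.adjoin ℂ {(EE p, 0), (KK p, κ)}

lemma EE_zero_mem_borelPairs : (EE p, 0) ∈ borelPairs p κ := Algebra.subset_adjoin (by simp)

lemma KK_mem_borelPairs : (KK p, κ) ∈ borelPairs p κ := Algebra.subset_adjoin (by simp)

lemma KKinv_mem_borelPairs (hp : 2 ≤ p) (hκ : ∀ m, κ m ^ (2 * p) = 1) :
    (KKinv p, κ⁻¹) ∈ borelPairs p κ := by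
  have h : (KKinv p, κ⁻¹) = (KK p, κ) ^ (2 * p - 1) := by
    refine Prod.ext (KKinv_eq_pow hp) (funext fun m ↦ inv_eq_of_mul_eq_one_right ?_)
    change κ m * κ m ^ (2 * p - 1) = 1
    rw [← pow_succ', Nat.sub_add_cancel (by omega), hκ]
  exact h ▸ pow_mem KK_mem_borelPairs _

lemma exists_smul_of_mem_closure_borel {b : Uq p × (ι → ℂ)}
    (hb : b ∈ Submonoid.closure {(EE p, 0), (KK p, κ)}) :
    ∃ (r : ℂ) (c a : ℕ), b = r • ((KK p, κ) ^ c * (EE p, 0) ^ a) := by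
  have hKE : ((KK p, κ) : Uq p × (ι → ℂ)) * (EE p, 0) = q p ^ 2 • ((EE p, 0) * (KK p, κ)) := by
    simp [KK_mul_EE]
  induction hb using Submonoid.closure_induction_right with
  | one => exact ⟨1, 0, 0, by simp⟩
  | mul_right y _ g hg ih =>
    obtain ⟨r, c, a, rfl⟩ := ih
    rcases hg with rfl | rfl
    · exact ⟨r, c, a + 1, by rw [smul_mul_assoc, mul_assoc, pow_succ]⟩
    · refine ⟨r * (q p ^ (2 * a))⁻¹, c + 1, a, ?_⟩
      have h := pow_mul_pow_of_mul_eq_smul hKE 1 a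
      rw [pow_one, one_mul, ← pow_mul] at h
      rw [smul_mul_assoc, mul_assoc, pow_succ, mul_assoc, h, mul_smul_comm, smul_smul, mul_assoc,
        inv_mul_cancel₀ (pow_ne_zero _ (q_ne_zero p)), mul_one]

lemma IsSLF.apply_fst_of_mem_borelPairs [Fintype ι] (hp : 2 ≤ p) {φ : Uq p →ₗ[ℂ] ℂ}
    (hφ : IsSLF p φ) {co : ι → ℂ} (h : ∀ c : ℕ, φ (KK p ^ c) = ∑ m, co m * κ m ^ c)
    {b : Uq p × (ι → ℂ)} (hb : b ∈ borelPairs p κ) : φ b.1 = ∑ m, co m * b.2 m := by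
  rw [borelPairs, ← Subalgebra.mem_toSubmodule, Algebra.adjoin_eq_span] at hb
  induction hb using Submodule.span_induction with
  | zero => simp
  | add b b' _ _ hb hb' => simp [hb, hb', mul_add, Finset.sum_add_distrib]
  | smul r b _ hb => simp [hb, Finset.mul_sum, mul_left_comm]
  | mem b hb =>
    obtain ⟨r, c, a, rfl⟩ := exists_smul_of_mem_closure_borel hb
    rcases eq_or_ne a 0 with rfl | ha
    · simp [h, Finset.mul_sum, mul_left_comm]
    · have hq : IsPrimitiveRoot (q p ^ 2) p := (q_isPrimitiveRoot hp).pow (by omega) rfl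
      have h₀ := hφ.apply_mul_pow_eq_zero hq (KK_mul_EE p) (EE_pow_self p)
        (Commute.self_pow (KK p) c) ha
      simp [h₀, ha]

end BorelPairs

section TensorVerma

/-- The matrix of `K` on the basis `F^i v_0` of the tensor product of a module of highest weight `l`
with a module over the algebra `A`, in which `k` acts as `K`. -/
def tensorKK (p : ℕ) {A : Type*} [Ring A] [Algebra ℂ A] (l : ℂ) (k : A) :
    Matrix (Fin p) (Fin p) A :=
  Matrix.diagonal fun i ↦ hwWeight p l i • k

/-- The matrix of `E` on the basis `F^i v_0` of the tensor product of a module of highest weight `l`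
with a module over the algebra `A`, in which `e`, `k` and `k'` act as `E`, `K` and `K⁻¹`. -/
def tensorEE (p : ℕ) {A : Type*} [Ring A] [Algebra ℂ A] (l : ℂ) (e k k' : A) :
    Matrix (Fin p) (Fin p) A :=
  (Matrix.diagonal fun _ ↦ l • e) +
    Matrix.of fun i j : Fin p ↦ if (i : ℕ) + 1 = j then raiseCoeff p (l • k) (l⁻¹ • k') j else 0

section Map

variable {p : ℕ} {A B : Type*} [Ring A] [Algebra ℂ A] [Ring B] [Algebra ℂ B] (f : A →ₐ[ℂ] B) (l : ℂ)

lemma mapMatrix_tensorKK (k : A) : f.mapMatrix (tensorKK p l k) = tensorKK p l (f k) := by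
  rw [tensorKK, tensorKK, AlgHom.mapMatrix_apply, Matrix.diagonal_map (map_zero f)]
  simp only [map_smul]

lemma mapMatrix_tensorEE (e k k' : A) :
    f.mapMatrix (tensorEE p l e k k') = tensorEE p l (f e) (f k) (f k') := by
  rw [tensorEE, tensorEE, map_add, AlgHom.mapMatrix_apply, Matrix.diagonal_map (map_zero f)]
  simp only [map_smul]
  congr 1
  ext i j
  rw [AlgHom.mapMatrix_apply, Matrix.map_apply, Matrix.of_apply, Matrix.of_apply, apply_ite f,
    map_zero, ← map_smul, ← map_smul]
  exact if_congr Iff.rfl (map_raiseCoeff p f.toLinearMap _ _ _) rfl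

lemma tensorEE_zero (k : ℂ) : tensorEE p l 0 k k⁻¹ = raising p (hwCoeff p (l * k)) := by
  ext i j
  rw [tensorEE, smul_zero, Matrix.diagonal_zero, zero_add, raising, Matrix.of_apply,
    Matrix.of_apply, smul_eq_mul, smul_eq_mul, ← mul_inv, raiseCoeff_inv]

lemma tensorKK_eq_diagonal (k : ℂ) :
    tensorKK p l k = Matrix.diagonal fun i : Fin p ↦ hwWeight p (l * k) i := by
  rw [tensorKK]
  congr 1
  ext i
  rw [smul_eq_mul, hwWeight, hwWeight, mul_right_comm]

end Map

variable {p : ℕ} {Δ : Uq p →ₐ[ℂ] (Uq p ⊗[ℂ] Uq p)} (hΔ : IsCoprod p Δ) {l : ℂ}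
  {ρ : Uq p →ₐ[ℂ] Matrix (Fin p) (Fin p) ℂ} (hρ : IsHighestWeightRep ρ l) {o : Fin p}
  (ho : (o : ℕ) = 0)

/-- The matrix of the vectors `F^i v_0` in terms of the standard basis of `ρ ⊗ Ū_q`. -/
def loweringMatrix (Δ : Uq p →ₐ[ℂ] (Uq p ⊗[ℂ] Uq p)) (ρ : Uq p →ₐ[ℂ] Matrix (Fin p) (Fin p) ℂ)
    (o : Fin p) : Matrix (Fin p) (Fin p) (Uq p) :=
  Matrix.of fun k i ↦ comatrix Δ ρ (FF p ^ (i : ℕ)) k o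

lemma comatrix_mul_loweringMatrix_apply (x : Uq p) (k i : Fin p) :
    (comatrix Δ ρ x * loweringMatrix Δ ρ o) k i = comatrix Δ ρ (x * FF p ^ (i : ℕ)) k o := by
  rw [map_mul, Matrix.mul_apply, Matrix.mul_apply]
  rfl

lemma comatrix_FF_mul_loweringMatrix :
    comatrix Δ ρ (FF p) * loweringMatrix Δ ρ o =
      loweringMatrix Δ ρ o * (XF p).map (algebraMap ℂ (Uq p)) := by
  ext k i
  rw [comatrix_mul_loweringMatrix_apply, ← pow_succ', Matrix.mul_apply]
  simp only [XF, Matrix.map_apply, Matrix.of_apply, apply_ite (algebraMap ℂ (Uq p)), map_one,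
    map_zero, mul_ite, mul_one, mul_zero]
  rcases lt_or_ge ((i : ℕ) + 1) p with hi | hi
  · rw [Fintype.sum_eq_single ⟨i + 1, hi⟩ fun m hm ↦ if_neg fun h ↦ hm (Fin.ext h), if_pos rfl]
    rfl
  · rw [show (i : ℕ) + 1 = p by omega, FF_pow_self, map_zero, Matrix.zero_apply]
    exact (Finset.sum_eq_zero fun m _ ↦ if_neg (by omega)).symm

include hΔ hρ ho

lemma isUnit_loweringMatrix : IsUnit (loweringMatrix Δ ρ o) := by
  refine isUnit_of_upperTriangular (fun i j hij ↦ comatrix_FF_pow_apply_of_lt hΔ hρ ho hij)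
    fun i ↦ ?_
  rw [loweringMatrix, Matrix.of_apply, comatrix_FF_pow_apply_self hΔ hρ ho i]
  exact IsUnit.pow _ ⟨⟨KKinv p, KK p, KKinv_mul_KK p, KK_mul_KKinv p⟩, rfl⟩

lemma comatrix_KK_mul_loweringMatrix :
    comatrix Δ ρ (KK p) * loweringMatrix Δ ρ o = loweringMatrix Δ ρ o * tensorKK p l (KK p) := by
  ext k i
  have h := pow_mul_pow_of_mul_eq_smul (KK_mul_FF p) 1 (i : ℕ)
  rw [pow_one, one_mul, inv_pow, ← pow_mul] at h
  rw [comatrix_mul_loweringMatrix_apply, tensorKK, Matrix.mul_diagonal, h, map_smul,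
    Matrix.smul_apply, comatrix_mul_KK_apply hΔ hρ ho, hwWeight, mul_comm l, ← smul_smul,
    mul_smul_comm (_ : ℂ)⁻¹]
  rfl

lemma comatrix_EE_mul_loweringMatrix (hp : 2 ≤ p) (hl : l ≠ 0) :
    comatrix Δ ρ (EE p) * loweringMatrix Δ ρ o =
      loweringMatrix Δ ρ o * tensorEE p l (EE p) (KK p) (KKinv p) := by
  ext k i
  rw [comatrix_mul_loweringMatrix_apply, tensorEE, mul_add, Matrix.add_apply, Matrix.mul_diagonal,
    Matrix.mul_apply]
  simp only [Matrix.of_apply, mul_ite, mul_zero]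
  obtain ⟨_ | i, hi⟩ := i
  · simp only [Nat.add_eq_zero_iff, one_ne_zero, and_false, if_false, Finset.sum_const_zero,
      add_zero]
    rw [pow_zero, mul_one, ← one_mul (EE p), comatrix_mul_EE_apply hΔ hρ ho, one_mul,
      loweringMatrix, Matrix.of_apply, pow_zero]
  · rw [Fintype.sum_eq_single ⟨i, by omega⟩ fun m hm ↦ if_neg fun h ↦
      hm (Fin.ext (by simpa using h)), if_pos rfl]
    simp only [EE_mul_FF_pow_succ hp]
    rw [map_add, Matrix.add_apply, comatrix_mul_EE_apply hΔ hρ ho]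
    congr 1
    rw [raiseCoeff, mul_smul_comm, mul_add, mul_smul_comm, mul_smul_comm, map_smul, map_add,
      map_smul, map_smul, Matrix.smul_apply, Matrix.add_apply, Matrix.smul_apply, Matrix.smul_apply,
      comatrix_mul_KK_apply hΔ hρ ho, comatrix_mul_KKinv_apply hΔ hρ ho hl, ← mul_smul_comm,
      ← mul_smul_comm, ← mul_add, ← mul_smul_comm]
    rfl

end TensorVerma

section ConvVerma

variable {p : ℕ} (hp : 2 ≤ p) {Δ : Uq p →ₐ[ℂ] (Uq p ⊗[ℂ] Uq p)} (hΔ : IsCoprod p Δ) {ι : Type*}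
  {l : ℂ} {κ : ι → ℂ} (hl : l ^ (2 * p) = 1) (hκ : ∀ m, κ m ^ (2 * p) = 1)

lemma mul_pow_eq_one {M : Type*} [CommMonoid M] {a b : M} {n : ℕ} (ha : a ^ n = 1)
    (hb : b ^ n = 1) : (a * b) ^ n = 1 := by
  rw [mul_pow, ha, hb, mul_one]

lemma tensorKK_mem_matrix_borelPairs :
    tensorKK p l (KK p, κ) ∈ (borelPairs p κ).matrix := fun i j ↦ by
  rw [tensorKK, Matrix.diagonal_apply]
  split_ifs
  exacts [Subalgebra.smul_mem _ KK_mem_borelPairs _, zero_mem _]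

include hp hκ

lemma tensorEE_mem_matrix_borelPairs :
    tensorEE p l (EE p, 0) (KK p, κ) (KKinv p, κ⁻¹) ∈ (borelPairs p κ).matrix := fun i j ↦ by
  rw [tensorEE, Matrix.add_apply, Matrix.diagonal_apply, Matrix.of_apply, raiseCoeff]
  have hE := Subalgebra.smul_mem (borelPairs p κ) EE_zero_mem_borelPairs l
  have hK := Subalgebra.smul_mem _ (KK_mem_borelPairs (p := p) (κ := κ)) l
  have hKinv := Subalgebra.smul_mem _ (KKinv_mem_borelPairs hp hκ) l⁻¹
  refine add_mem ?_ ?_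
  · split_ifs
    exacts [hE, zero_mem _]
  · split_ifs
    exacts [Subalgebra.smul_mem _ (add_mem (Subalgebra.smul_mem _ hK _)
      (Subalgebra.smul_mem _ hKinv _)) _, zero_mem _]

include hΔ

lemma exists_mem_matrix_borelPairs {ρ : Uq p →ₐ[ℂ] Matrix (Fin p) (Fin p) ℂ}
    (hρ : IsHighestWeightRep ρ l) {o : Fin p} (ho : (o : ℕ) = 0) (x : Uq p) :
    ∃ R ∈ (borelPairs p κ).matrix,
      comatrix Δ ρ x * loweringMatrix Δ ρ o =
        loweringMatrix Δ ρ o * (AlgHom.fst ℂ (Uq p) (ι → ℂ)).mapMatrix R ∧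
      ∀ m, ((Pi.evalAlgHom ℂ (fun _ ↦ ℂ) m).comp (AlgHom.snd ℂ (Uq p) (ι → ℂ))).mapMatrix R =
        verma hp (mul_pow_eq_one hl (hκ m)) x := by
  have hl₀ := ne_zero_of_pow_two_mul_eq_one hp hl
  have hV m := isHighestWeightRep_verma hp (mul_pow_eq_one hl (hκ m))
  induction x using Uq_induction hp with
  | E =>
    refine ⟨_, tensorEE_mem_matrix_borelPairs hp (l := l) hκ, ?_, fun m ↦ ?_⟩
    · rw [comatrix_EE_mul_loweringMatrix hΔ hρ ho hp hl₀, mapMatrix_tensorEE]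
      rfl
    · rw [mapMatrix_tensorEE, (hV m).map_EE, ← tensorEE_zero]
      rfl
  | F =>
    refine ⟨(XF p).map (algebraMap ℂ _), fun i j ↦ Subalgebra.algebraMap_mem _ _, ?_, fun m ↦ ?_⟩
    · rw [comatrix_FF_mul_loweringMatrix, AlgHom.mapMatrix_apply, Matrix.map_map]
      rfl
    · rw [(hV m).map_FF, AlgHom.mapMatrix_apply, Matrix.map_map]
      rfl
  | K =>
    refine ⟨_, tensorKK_mem_matrix_borelPairs (l := l), ?_, fun m ↦ ?_⟩
    · rw [comatrix_KK_mul_loweringMatrix hΔ hρ ho, mapMatrix_tensorKK]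
      rfl
    · rw [mapMatrix_tensorKK, (hV m).map_KK, ← tensorKK_eq_diagonal]
      rfl
  | algebraMap c =>
    exact ⟨algebraMap ℂ _ c, Subalgebra.algebraMap_mem _ c,
      by rw [AlgHom.commutes, AlgHom.commutes, Algebra.commutes],
      fun m ↦ by rw [AlgHom.commutes, AlgHom.commutes]⟩
  | add x y hx hy =>
    obtain ⟨R, hR, hRW, hRm⟩ := hx
    obtain ⟨S, hS, hSW, hSm⟩ := hy
    exact ⟨R + S, add_mem hR hS, by rw [map_add, map_add, add_mul, mul_add, hRW, hSW],
      fun m ↦ by rw [map_add, map_add, hRm, hSm]⟩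
  | mul x y hx hy =>
    obtain ⟨R, hR, hRW, hRm⟩ := hx
    obtain ⟨S, hS, hSW, hSm⟩ := hy
    exact ⟨R * S, mul_mem hR hS,
      by rw [map_mul, map_mul, mul_assoc, hSW, ← mul_assoc, hRW, mul_assoc],
      fun m ↦ by rw [map_mul, map_mul, hRm, hSm]⟩

lemma IsSLF.conv_chiOf_of_isHighestWeightRep [Fintype ι] {φ : Uq p →ₗ[ℂ] ℂ} (hφ : IsSLF p φ)
    {co : ι → ℂ} (h : ∀ c : ℕ, φ (KK p ^ c) = ∑ m, co m * κ m ^ c)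
    {ρ : Uq p →ₐ[ℂ] Matrix (Fin p) (Fin p) ℂ} (hρ : IsHighestWeightRep ρ l) :
    conv p Δ φ (chiOf p ρ) =
      ∑ m, co m • chiOf p (verma hp (mul_pow_eq_one hl (hκ m))) := by
  ext x
  obtain ⟨R, hR, hRW, hRm⟩ :=
    exists_mem_matrix_borelPairs hp hΔ hl hκ hρ (o := ⟨0, by omega⟩) rfl x
  obtain ⟨W, hW⟩ := isUnit_loweringMatrix hΔ hρ (o := ⟨0, by omega⟩) rfl
  have hconj : comatrix Δ ρ x = (W : Matrix (Fin p) (Fin p) (Uq p)) *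
      ((AlgHom.fst ℂ (Uq p) (ι → ℂ)).mapMatrix R * (W⁻¹ : (Matrix (Fin p) (Fin p) (Uq p))ˣ)) := by
    rw [← mul_assoc, hW, ← hRW, ← hW, Units.mul_inv_cancel_right]
  rw [conv_chiOf_apply, hconj, hφ.trace_mul_comm, mul_assoc, Units.inv_mul, mul_one, Matrix.trace,
    map_sum, LinearMap.sum_apply]
  calc ∑ i, φ (R i i).1 = ∑ i, ∑ m, co m * (R i i).2 m :=
        Finset.sum_congr rfl fun i _ ↦ hφ.apply_fst_of_mem_borelPairs hp h (hR i i)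
    _ = ∑ m, ∑ i, co m * (R i i).2 m := Finset.sum_comm
    _ = _ := Finset.sum_congr rfl fun m _ ↦ by
      change _ = co m * (verma hp _ x).trace
      rw [← hRm m, Matrix.trace, Finset.mul_sum]
      rfl

end ConvVerma

lemma exists_eq_sum_mul_pow_of_periodic {k : Type*} [Field k] {ζ : k} {n : ℕ} [NeZero n]
    (hζ : IsPrimitiveRoot ζ n) {f : ℕ → k} (hf : Function.Periodic f n) :
    ∃ co : Fin n → k, ∀ c, f c = ∑ m, co m * (ζ ^ (m : ℕ)) ^ c := by
  set V := Matrix.vandermonde fun m : Fin n ↦ ζ ^ (m : ℕ) with hV_def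
  have hV : IsUnit V := V.isUnit_iff_isUnit_det.mpr <| isUnit_iff_ne_zero.mpr <|
    Matrix.det_vandermonde_ne_zero_iff.mpr fun i j h ↦ Fin.ext (hζ.pow_inj i.2 j.2 h)
  obtain ⟨co, hco⟩ := Matrix.mulVec_surjective_iff_isUnit.mpr hV fun c : Fin n ↦ f c
  refine ⟨co, fun c ↦ ?_⟩
  have hc : c % n < n := Nat.mod_lt c (NeZero.pos n)
  rw [← hf.map_mod_nat c]
  refine (congrFun hco ⟨c % n, hc⟩).symm.trans ?_
  rw [Matrix.mulVec, dotProduct]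
  refine Finset.sum_congr rfl fun m _ ↦ ?_
  rw [mul_comm, hV_def, Matrix.vandermonde_apply, pow_right_comm, pow_eq_pow_mod c (n := n)
    (by rw [pow_right_comm, hζ.pow_eq_one, one_pow])]

lemma IsHighestWeightRep.chiOf_eq_add {p n a b : ℕ} (hp : 2 ≤ p) {l : ℂ} (hl : l ≠ 0)
    {ρ : Uq p →ₐ[ℂ] Matrix (Fin n) (Fin n) ℂ} {ρ₁ : Uq p →ₐ[ℂ] Matrix (Fin a) (Fin a) ℂ}
    {ρ₂ : Uq p →ₐ[ℂ] Matrix (Fin b) (Fin b) ℂ} (hρ : IsHighestWeightRep ρ l)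
    (hρ₁ : IsHighestWeightRep ρ₁ l) (hρ₂ : IsHighestWeightRep ρ₂ (hwWeight p l a))
    (hn : n = a + b) (ht : q p * hwWeight p l a = (q p * l)⁻¹) :
    chiOf p ρ = chiOf p ρ₁ + chiOf p ρ₂ := by
  refine (isSLF_chiOf ρ).eq_of_casimir_eigenform hp ((isSLF_chiOf ρ₁).add (isSLF_chiOf ρ₂))
    (hρ.chiOf_casimir_mul hp hl) (fun x ↦ ?_) fun c ↦ ?_
  · rw [LinearMap.add_apply, LinearMap.add_apply, hρ₁.chiOf_casimir_mul hp hl,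
      hρ₂.chiOf_casimir_mul hp (hwWeight_ne_zero p hl a), ht, inv_inv, mul_add,
      add_comm (q p * l)⁻¹]
  · rw [LinearMap.add_apply, hρ.chiOf_KK_pow, hρ₁.chiOf_KK_pow, hρ₂.chiOf_KK_pow, hn,
      Finset.sum_range_add]
    congr 1
    refine Finset.sum_congr rfl fun i _ ↦ ?_
    rw [hwWeight, hwWeight, hwWeight, mul_add, pow_add, mul_inv, mul_assoc]

lemma IsHighestWeightRep.unique {p n : ℕ} (hp : 2 ≤ p) {l : ℂ}
    {ρ ρ' : Uq p →ₐ[ℂ] Matrix (Fin n) (Fin n) ℂ} (hρ : IsHighestWeightRep ρ l)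
    (hρ' : IsHighestWeightRep ρ' l) : ρ = ρ' :=
  Uq_algHom_ext hp (hρ.map_EE.trans hρ'.map_EE.symm) (hρ.map_FF.trans hρ'.map_FF.symm)
    (hρ.map_KK.trans hρ'.map_KK.symm)

section Vsub

variable {p : ℕ} (hp : 2 ≤ p) {α : ℂ} (hα : α = 1 ∨ α = -1)
  {ρX : (α : ℂ) → (s : ℕ) → (Uq p →ₐ[ℂ] Matrix (Fin s) (Fin s) ℂ)} (hX : IsXRep p ρX)

include hp hα

lemma mul_zpow_pow_two_mul (n : ℤ) : (α * q p ^ n) ^ (2 * p) = 1 := by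
  refine mul_pow_eq_one ?_ ?_
  · rcases hα with rfl | rfl <;> simp
  · rw [← zpow_natCast, zpow_comm, zpow_natCast, (q_isPrimitiveRoot hp).pow_eq_one, one_zpow]

include hX

lemma chiOf_add_chiOf_eq_chiOf_verma {s : ℕ} (hsp : s ≤ p - 1) :
    chiOf p (ρX α s) + chiOf p (ρX (-α) (p - s)) =
      chiOf p (verma hp (mul_zpow_pow_two_mul hp hα ((s : ℤ) - 1))) := by
  have hq := q_ne_zero p
  have hα' : -α = 1 ∨ -α = -1 := hα.symm.imp (by rintro rfl; norm_num) (by rintro rfl; rfl)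
  have hV := isHighestWeightRep_verma hp (mul_zpow_pow_two_mul hp hα ((s : ℤ) - 1))
  have hα_inv : α⁻¹ = α := by rcases hα with rfl | rfl <;> norm_num
  have weight_eq : hwWeight p (α * q p ^ ((s : ℤ) - 1)) s = α * (q p ^ (s + 1))⁻¹ := by
    rw [hwWeight, zpow_sub_one₀ hq, zpow_natCast]
    field_simp
    ring
  have hX₂ : IsHighestWeightRep (ρX (-α) (p - s)) (hwWeight p (α * q p ^ ((s : ℤ) - 1)) s) := by
    convert hX.isHighestWeightRep hp hα' (p.sub_le s) using 1
    rw [weight_eq, Nat.cast_sub (by omega), sub_sub, zpow_sub₀ hq, zpow_natCast, q_pow_self hp,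
      ← Nat.cast_add_one, zpow_natCast]
    ring
  refine (hV.chiOf_eq_add hp (ne_zero_of_pow_two_mul_eq_one hp (mul_zpow_pow_two_mul hp hα _))
    (hX.isHighestWeightRep hp hα (by omega)) hX₂ (by omega) ?_).symm
  rw [weight_eq, q_mul_zpow_sub_one, mul_inv, hα_inv, zpow_natCast, pow_succ]
  field_simp

lemma chiOf_eq_chiOf_verma :
    chiOf p (ρX α p) = chiOf p (verma hp (mul_zpow_pow_two_mul hp hα ((p : ℤ) - 1))) := by
  rw [(hX.isHighestWeightRep hp hα le_rfl).unique hp (isHighestWeightRep_verma hp _)]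

omit hα

lemma chiOf_verma_mem_Vsub {l : ℂ} (hl : l ^ (2 * p) = 1) : chiOf p (verma hp hl) ∈ Vsub p ρX := by
  obtain ⟨α, hα, s, hs, hsp, rfl⟩ : ∃ α : ℂ, (α = 1 ∨ α = -1) ∧ ∃ s : ℕ, 1 ≤ s ∧ s ≤ p ∧
      l = α * q p ^ ((s : ℤ) - 1) := by
    have : NeZero (2 * p) := ⟨by omega⟩
    obtain ⟨k, hk, rfl⟩ := (q_isPrimitiveRoot hp).eq_pow_of_pow_eq_one hl
    rcases lt_or_ge k p with hkp | hkp
    · exact ⟨1, .inl rfl, k + 1, by omega, by omega, by simp⟩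
    · refine ⟨-1, .inr rfl, k - p + 1, by omega, by omega, ?_⟩
      rw [← q_pow_self hp, Nat.cast_add_one, add_sub_cancel_right, zpow_natCast, ← pow_add,
        Nat.add_sub_cancel' hkp]
  rcases hsp.eq_or_lt with rfl | hsp
  · rw [← chiOf_eq_chiOf_verma hp hα hX]
    rcases hα with rfl | rfl <;> exact Submodule.subset_span (by simp)
  · rw [← chiOf_add_chiOf_eq_chiOf_verma hp hα hX (by omega)]
    rcases hα with rfl | rfl
    · refine Submodule.subset_span (.inl ⟨⟨s - 1, by omega⟩, ?_⟩)
      dsimp only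
      rw [Nat.sub_add_cancel hs]
    · refine Submodule.subset_span (.inl ⟨⟨p - s - 1, by omega⟩, ?_⟩)
      dsimp only
      rw [Nat.sub_add_cancel (by omega : 1 ≤ p - s), Nat.sub_sub_self hsp.le, add_comm, neg_neg]

lemma Vsub_eq_span_verma :
    Vsub p ρX = Submodule.span ℂ {χ | ∃ l, ∃ hl : l ^ (2 * p) = 1, χ = chiOf p (verma hp hl)} := by
  refine le_antisymm (Submodule.span_mono ?_) (Submodule.span_le.mpr ?_)
  · rintro _ (⟨s, rfl⟩ | rfl | rfl)
    · exact ⟨_, _, chiOf_add_chiOf_eq_chiOf_verma hp (.inl rfl) hX (by omega)⟩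
    · exact ⟨_, _, chiOf_eq_chiOf_verma hp (.inl rfl) hX⟩
    · exact ⟨_, _, chiOf_eq_chiOf_verma hp (.inr rfl) hX⟩
  · rintro _ ⟨l, hl, rfl⟩
    exact chiOf_verma_mem_Vsub hp hX hl

lemma conv_mem_Vsub {Δ : Uq p →ₐ[ℂ] (Uq p ⊗[ℂ] Uq p)} (hΔ : IsCoprod p Δ) {φ v : Uq p →ₗ[ℂ] ℂ}
    (hφ : IsSLF p φ) (hv : v ∈ Vsub p ρX) : conv p Δ φ v ∈ Vsub p ρX := by
  have hq := q_isPrimitiveRoot hp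
  have : NeZero (2 * p) := ⟨by omega⟩
  obtain ⟨co, hco⟩ := exists_eq_sum_mul_pow_of_periodic hq (f := fun c ↦ φ (KK p ^ c)) fun c ↦ by
    simp only [pow_add, KK_pow_two_mul, mul_one]
  rw [Vsub_eq_span_verma hp hX] at hv
  induction hv using Submodule.span_induction with
  | zero => simp [conv]
  | add v w _ _ hv hw => exact conv_add_right Δ φ v w ▸ add_mem hv hw
  | smul c v _ hv => exact conv_smul_right Δ c φ v ▸ Submodule.smul_mem _ c hv
  | mem v hv =>
    obtain ⟨l, hl, rfl⟩ := hv
    rw [hφ.conv_chiOf_of_isHighestWeightRep hp hΔ hl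
      (fun m : Fin (2 * p) ↦ by rw [pow_right_comm, hq.pow_eq_one, one_pow]) hco
      (isHighestWeightRep_verma hp hl)]
    exact sum_mem fun m _ ↦ Submodule.smul_mem _ _ (chiOf_verma_mem_Vsub hp hX _)

end Vsub

lemma IsSLF.conv_chiOf_verma_eq_zero {p : ℕ} (hp : 2 ≤ p) {Δ : Uq p →ₐ[ℂ] (Uq p ⊗[ℂ] Uq p)}
    (hΔ : IsCoprod p Δ) {φ : Uq p →ₗ[ℂ] ℂ} (hφ : IsSLF p φ) (h : ∀ c : ℕ, φ (KK p ^ c) = 0) {l : ℂ}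
    (hl : l ^ (2 * p) = 1) : conv p Δ φ (chiOf p (verma hp hl)) = 0 := by
  rw [hφ.conv_chiOf_of_isHighestWeightRep hp hΔ (κ := (Fin.elim0 : Fin 0 → ℂ)) (co := Fin.elim0) hl
    (fun m ↦ m.elim0) (by simpa using h) (isHighestWeightRep_verma hp hl),
    Finset.univ_eq_empty, Finset.sum_empty]

/-! ### The forms `G_s` -/

section BlockMat

variable {m n R : Type*} [Ring R]

/-- The shape common to all operators on a projective module with top and socle `X` and middle
layer `X' ⊕ X'`, in the order (top, middle, middle, socle). -/
def blockMat (X : Matrix m m R) (X' : Matrix n n R) (B₁ B₂ : Matrix n m R) (A₁ A₂ : Matrix m n R)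
    (H : Matrix m m R) : Matrix (m ⊕ (n ⊕ (n ⊕ m))) (m ⊕ (n ⊕ (n ⊕ m))) R :=
  .fromBlocks X 0 (.fromRows B₁ (.fromRows B₂ H))
    (.fromBlocks X' 0 (.fromRows 0 A₁) (.fromBlocks X' 0 A₂ X))

variable (X Y : Matrix m m R) (X' Y' : Matrix n n R) (B₁ B₂ D₁ D₂ : Matrix n m R)
  (A₁ A₂ C₁ C₂ : Matrix m n R) (H I : Matrix m m R)

lemma blockMat_add :
    blockMat X X' B₁ B₂ A₁ A₂ H + blockMat Y Y' D₁ D₂ C₁ C₂ I =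
      blockMat (X + Y) (X' + Y') (B₁ + D₁) (B₂ + D₂) (A₁ + C₁) (A₂ + C₂) (H + I) := by
  ext (i | i | i | i) (j | j | j | j) <;> simp [blockMat]

lemma blockMat_smul (c : R) :
    c • blockMat X X' B₁ B₂ A₁ A₂ H =
      blockMat (c • X) (c • X') (c • B₁) (c • B₂) (c • A₁) (c • A₂) (c • H) := by
  ext (i | i | i | i) (j | j | j | j) <;> simp [blockMat]

lemma blockMat_one [DecidableEq m] [DecidableEq n] :
    blockMat (1 : Matrix m m R) (1 : Matrix n n R) 0 0 0 0 0 = 1 := by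
  simp [blockMat]

variable [Fintype m] [Fintype n]

lemma blockMat_mul :
    blockMat X X' B₁ B₂ A₁ A₂ H * blockMat Y Y' D₁ D₂ C₁ C₂ I =
      blockMat (X * Y) (X' * Y') (B₁ * Y + X' * D₁) (B₂ * Y + X' * D₂) (A₁ * Y' + X * C₁)
        (A₂ * Y' + X * C₂) (H * Y + A₁ * D₁ + A₂ * D₂ + X * I) := by
  ext (i | i | i | i) (j | j | j | j) <;>
    simp [blockMat, Matrix.mul_apply, add_assoc]

lemma blockMat_diagonal_pow [DecidableEq m] [DecidableEq n] (c : ℕ) :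
    blockMat X X' 0 0 0 0 0 ^ c = blockMat (X ^ c) (X' ^ c) 0 0 0 0 0 := by
  simp [blockMat, Matrix.fromBlocks_diagonal_pow]

end BlockMat

/-- The sum of the entries mapping the top of a projective module identically onto its socle. -/
def topToSocle {p : ℕ} {m n : Type} [Fintype m] [Fintype n] [DecidableEq m] [DecidableEq n]
    (ρ : Uq p →ₐ[ℂ] Matrix (m ⊕ (n ⊕ (n ⊕ m))) (m ⊕ (n ⊕ (n ⊕ m))) ℂ) : Uq p →ₗ[ℂ] ℂ :=
  ∑ i : m, (entry (.inr (.inr (.inr i))) (.inl i)).comp ρ.toLinearMap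

lemma topToSocle_apply {p : ℕ} {m n : Type} [Fintype m] [Fintype n] [DecidableEq m]
    [DecidableEq n] {ρ : Uq p →ₐ[ℂ] Matrix (m ⊕ (n ⊕ (n ⊕ m))) (m ⊕ (n ⊕ (n ⊕ m))) ℂ} {x : Uq p}
    {X : Matrix m m ℂ} {X' : Matrix n n ℂ} {B₁ B₂ : Matrix n m ℂ} {A₁ A₂ : Matrix m n ℂ}
    {H : Matrix m m ℂ} (h : ρ x = blockMat X X' B₁ B₂ A₁ A₂ H) : topToSocle ρ x = H.trace := by
  simp only [topToSocle, LinearMap.sum_apply, LinearMap.comp_apply, AlgHom.toLinearMap_apply, h]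
  rfl

/-- The matrix unit sending the first basis vector to the last one. -/
def firstToLast (m n : ℕ) : Matrix (Fin m) (Fin n) ℂ :=
  Matrix.of fun i j ↦ if (j : ℕ) = 0 ∧ (i : ℕ) + 1 = m then 1 else 0

/-- The matrix unit sending the last basis vector to the first one. -/
def lastToFirst (m n : ℕ) : Matrix (Fin m) (Fin n) ℂ :=
  Matrix.of fun i j ↦ if (j : ℕ) + 1 = n ∧ (i : ℕ) = 0 then 1 else 0

lemma XF_mul_firstToLast (m n : ℕ) : XF m * firstToLast m n = 0 := by
  ext i j
  rw [Matrix.mul_apply, Matrix.zero_apply]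
  refine Finset.sum_eq_zero fun k _ ↦ ?_
  simp only [XF, firstToLast, Matrix.of_apply, ← ite_and, mul_ite, mul_one, mul_zero]
  exact if_neg (by omega)

lemma lastToFirst_mul_raising (m n : ℕ) (c : ℕ → ℂ) : lastToFirst m n * raising n c = 0 := by
  ext i j
  rw [Matrix.mul_apply, Matrix.zero_apply]
  refine Finset.sum_eq_zero fun k _ ↦ ?_
  simp only [lastToFirst, raising, Matrix.of_apply, ite_mul, one_mul, zero_mul, ← ite_and]
  exact if_neg (by omega)

lemma lastToFirst_mul_firstToLast {m n : ℕ} (hn : n ≠ 0) :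
    lastToFirst m n * firstToLast n m =
      Matrix.diagonal fun i : Fin m ↦ if (i : ℕ) = 0 then 1 else 0 := by
  ext i j
  rw [Matrix.mul_apply, Fintype.sum_eq_single ⟨n - 1, by omega⟩]
  · simp only [lastToFirst, firstToLast, Matrix.of_apply, Matrix.diagonal_apply, Fin.ext_iff]
    split_ifs <;> first | omega | simp
  · intro k hk
    simp only [ne_eq, Fin.ext_iff] at hk
    rw [lastToFirst, Matrix.of_apply, if_neg (by omega), zero_mul]

/-- `ρ` is an indecomposable projective module with top and socle `σ` and middle layer `σ' ⊕ σ'`,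
in a standard basis. -/
structure IsProjectiveRep {p m n : ℕ}
    (ρ : Uq p →ₐ[ℂ] Matrix (Fin m ⊕ (Fin n ⊕ (Fin n ⊕ Fin m)))
      (Fin m ⊕ (Fin n ⊕ (Fin n ⊕ Fin m))) ℂ)
    (σ : Uq p →ₐ[ℂ] Matrix (Fin m) (Fin m) ℂ) (σ' : Uq p →ₐ[ℂ] Matrix (Fin n) (Fin n) ℂ) :
    Prop where
  map_EE : ρ (EE p) = blockMat (σ (EE p)) (σ' (EE p)) (firstToLast n m) 0 0 (firstToLast m n)
    (raising m fun j ↦ if j = 0 then 0 else 1)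
  map_FF : ρ (FF p) = blockMat (σ (FF p)) (σ' (FF p)) 0 (lastToFirst n m) (lastToFirst m n) 0 0
  map_KK : ρ (KK p) = blockMat (σ (KK p)) (σ' (KK p)) 0 0 0 0 0

namespace IsProjectiveRep

variable {p m n : ℕ}
  {ρ₁ : Uq p →ₐ[ℂ] Matrix (Fin m ⊕ (Fin n ⊕ (Fin n ⊕ Fin m)))
    (Fin m ⊕ (Fin n ⊕ (Fin n ⊕ Fin m))) ℂ}
  {ρ₂ : Uq p →ₐ[ℂ] Matrix (Fin n ⊕ (Fin m ⊕ (Fin m ⊕ Fin n)))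
    (Fin n ⊕ (Fin m ⊕ (Fin m ⊕ Fin n))) ℂ}
  {σ : Uq p →ₐ[ℂ] Matrix (Fin m) (Fin m) ℂ} {σ' : Uq p →ₐ[ℂ] Matrix (Fin n) (Fin n) ℂ}

/-- The off-diagonal blocks of the two projective modules of a linkage class are interchanged. -/
lemma exists_eq_blockMat (hp : 2 ≤ p) (h₁ : IsProjectiveRep ρ₁ σ σ')
    (h₂ : IsProjectiveRep ρ₂ σ' σ) (x : Uq p) :
    ∃ B₁ B₂ A₁ A₂ H H', ρ₁ x = blockMat (σ x) (σ' x) B₁ B₂ A₁ A₂ H ∧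
      ρ₂ x = blockMat (σ' x) (σ x) A₂ A₁ B₂ B₁ H' := by
  induction x using Uq_induction hp with
  | E => exact ⟨_, _, _, _, _, _, h₁.map_EE, h₂.map_EE⟩
  | F => exact ⟨_, _, _, _, _, _, h₁.map_FF, h₂.map_FF⟩
  | K => exact ⟨_, _, _, _, _, _, h₁.map_KK, h₂.map_KK⟩
  | algebraMap c =>
    refine ⟨0, 0, 0, 0, 0, 0, ?_, ?_⟩ <;>
      simp only [Algebra.algebraMap_eq_smul_one, map_smul, map_one] <;>
      rw [← blockMat_one, blockMat_smul] <;> simp only [smul_zero]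
  | add x y hx hy =>
    obtain ⟨B₁, B₂, A₁, A₂, H, H', hx₁, hx₂⟩ := hx
    obtain ⟨D₁, D₂, C₁, C₂, I, I', hy₁, hy₂⟩ := hy
    simp only [map_add, hx₁, hx₂, hy₁, hy₂, blockMat_add]
    exact ⟨_, _, _, _, _, _, rfl, rfl⟩
  | mul x y hx hy =>
    obtain ⟨B₁, B₂, A₁, A₂, H, H', hx₁, hx₂⟩ := hx
    obtain ⟨D₁, D₂, C₁, C₂, I, I', hy₁, hy₂⟩ := hy
    simp only [map_mul, hx₁, hx₂, hy₁, hy₂, blockMat_mul]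
    exact ⟨_, _, _, _, _, _, rfl, rfl⟩

lemma isSLF_topToSocle_add (hp : 2 ≤ p) (h₁ : IsProjectiveRep ρ₁ σ σ')
    (h₂ : IsProjectiveRep ρ₂ σ' σ) : IsSLF p (topToSocle ρ₁ + topToSocle ρ₂) := by
  intro x y
  obtain ⟨B₁, B₂, A₁, A₂, H, H', hx₁, hx₂⟩ := exists_eq_blockMat hp h₁ h₂ x
  obtain ⟨D₁, D₂, C₁, C₂, I, I', hy₁, hy₂⟩ := exists_eq_blockMat hp h₁ h₂ y
  simp only [LinearMap.add_apply]
  rw [topToSocle_apply (by rw [map_mul, hx₁, hy₁, blockMat_mul]),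
    topToSocle_apply (by rw [map_mul, hx₂, hy₂, blockMat_mul]),
    topToSocle_apply (by rw [map_mul, hy₁, hx₁, blockMat_mul]),
    topToSocle_apply (by rw [map_mul, hy₂, hx₂, blockMat_mul])]
  simp only [Matrix.trace_add]
  rw [Matrix.trace_mul_comm H, Matrix.trace_mul_comm A₁, Matrix.trace_mul_comm A₂,
    Matrix.trace_mul_comm (σ x), Matrix.trace_mul_comm H', Matrix.trace_mul_comm B₂,
    Matrix.trace_mul_comm B₁, Matrix.trace_mul_comm (σ' x)]
  ring

lemma map_KK_pow (h₁ : IsProjectiveRep ρ₁ σ σ') (c : ℕ) :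
    ρ₁ (KK p ^ c) = blockMat (σ (KK p ^ c)) (σ' (KK p ^ c)) 0 0 0 0 0 := by
  simp only [map_pow, h₁.map_KK, blockMat_diagonal_pow]

lemma topToSocle_KK_pow (h₁ : IsProjectiveRep ρ₁ σ σ') (c : ℕ) :
    topToSocle ρ₁ (KK p ^ c) = 0 := by
  rw [topToSocle_apply (h₁.map_KK_pow c), Matrix.trace_zero]

lemma map_casimir (hp : 2 ≤ p) (h₁ : IsProjectiveRep ρ₁ σ σ') {l l' : ℂ}
    (hσ : IsHighestWeightRep σ l) (hσ' : IsHighestWeightRep σ' l') (hn : n ≠ 0) :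
    ρ₁ (casimir p) = blockMat (σ (casimir p)) (σ' (casimir p)) 0 0 0 0 (qDiff p ^ 2 • 1) := by
  have map_FF_mul_EE : ρ₁ (FF p * EE p) =
      blockMat (σ (FF p * EE p)) (σ' (FF p * EE p)) 0 0 0 0 1 := by
    rw [map_mul, h₁.map_FF, h₁.map_EE, blockMat_mul, map_mul, map_mul, hσ.map_EE, hσ.map_FF,
      hσ'.map_EE, hσ'.map_FF]
    simp only [XF_mul_firstToLast, lastToFirst_mul_raising, Matrix.zero_mul, Matrix.mul_zero,
      add_zero, zero_add]
    rw [lastToFirst_mul_firstToLast hn,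
      XF_mul_raising (c := fun j ↦ if j = 0 then 0 else 1) (if_pos rfl), Matrix.diagonal_add,
      ← Matrix.diagonal_one]
    congr 2
    ext i
    split_ifs <;> simp
  rw [casimir, map_add, map_add, map_smul, map_smul, map_smul, map_FF_mul_EE, KKinv_eq_pow hp,
    h₁.map_KK, h₁.map_KK_pow, blockMat_smul, blockMat_smul, blockMat_smul, blockMat_add,
    blockMat_add]
  simp only [map_add, map_smul, smul_zero, add_zero]

lemma topToSocle_casimir_mul (hp : 2 ≤ p) (h₁ : IsProjectiveRep ρ₁ σ σ')
    (h₂ : IsProjectiveRep ρ₂ σ' σ) {l l' : ℂ} (hl : l ≠ 0) (hσ : IsHighestWeightRep σ l)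
    (hσ' : IsHighestWeightRep σ' l') (hn : n ≠ 0) (x : Uq p) :
    topToSocle ρ₁ (casimir p * x) =
      (q p * l + (q p * l)⁻¹) * topToSocle ρ₁ x + qDiff p ^ 2 * chiOf p σ x := by
  obtain ⟨B₁, B₂, A₁, A₂, H, -, hx, -⟩ := exists_eq_blockMat hp h₁ h₂ x
  rw [topToSocle_apply hx,
    topToSocle_apply (by rw [map_mul, h₁.map_casimir hp hσ hσ' hn, hx, blockMat_mul])]
  simp only [Matrix.zero_mul, add_zero, hσ.map_casimir hp hl, smul_one_mul, Matrix.trace_add,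
    Matrix.trace_smul, smul_eq_mul]
  exact add_comm _ _

end IsProjectiveRep

/-- The form `χ^+_s + χ^-_{p-s}`, also for `s = 0` and `s = p`, where it is `χ^-_p` and `χ^+_p`. -/
def linkedChi (p : ℕ) (ρX : (α : ℂ) → (s : ℕ) → (Uq p →ₐ[ℂ] Matrix (Fin s) (Fin s) ℂ)) (s : ℕ) :
    Uq p →ₗ[ℂ] ℂ :=
  chiOf p (ρX 1 s) + chiOf p (ρX (-1) (p - s))

section GForms

variable {p : ℕ} {ρX : (α : ℂ) → (s : ℕ) → (Uq p →ₐ[ℂ] Matrix (Fin s) (Fin s) ℂ)}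
  {ρP : (α : ℂ) → (s : ℕ) → (Uq p →ₐ[ℂ] Matrix (PIdx p s) (PIdx p s) ℂ)}
  (hX : IsXRep p ρX) (hP : IsPRep p ρP)

include hX hP

lemma IsPRep.isProjectiveRep {α : ℂ} (hα : α = 1 ∨ α = -1) {s : ℕ} (hs : 1 ≤ s)
    (hsp : s ≤ p - 1) : IsProjectiveRep (ρP α s) (ρX α s) (ρX (-α) (p - s)) := by
  have hα' : -α = 1 ∨ -α = -1 := by
    rw [neg_eq_iff_eq_neg, neg_inj]
    exact hα.symm
  have hcast : ((p - s : ℕ) : ℤ) = p - s := by omega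
  obtain ⟨hK, hE, hF⟩ := hX α hα s hs (by omega)
  obtain ⟨hK', hE', hF'⟩ := hX (-α) hα' (p - s) (by omega) (by omega)
  obtain ⟨hPK, hPE, hPF⟩ := hP α hα s hs hsp
  refine ⟨?_, ?_, ?_⟩
  · rw [hPE, hE, hE']
    ext (i | i | i | i) (j | j | j | j) <;> simp [PE, blockMat, XE, firstToLast, raising, hcast]
    grind
  · rw [hPF, hF, hF']
    ext (i | i | i | i) (j | j | j | j) <;> simp [PF, blockMat, XF, lastToFirst]
  · rw [hPK, hK, hK']
    ext (i | i | i | i) (j | j | j | j) <;>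
      simp [PK, PKdiag, blockMat, XK, Matrix.diagonal_apply, hcast]

variable {s : ℕ} (hs : 1 ≤ s) (hsp : s ≤ p - 1)

include hs hsp

/-- Replaces the index `p - (p - s)` occurring in `P^-(p-s)` by `s`. -/
lemma exists_GOf_eq_topToSocle_add :
    ∃ ρ₂ : Uq p →ₐ[ℂ] Matrix (Fin (p - s) ⊕ (Fin s ⊕ (Fin s ⊕ Fin (p - s))))
        (Fin (p - s) ⊕ (Fin s ⊕ (Fin s ⊕ Fin (p - s)))) ℂ,
      IsProjectiveRep ρ₂ (ρX (-1) (p - s)) (ρX 1 s) ∧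
        GOf p ρP s = topToSocle (ρP 1 s) + topToSocle ρ₂ := by
  have transport (s' : ℕ) (h : s' = s)
      (ρ : Uq p →ₐ[ℂ] Matrix (Fin (p - s) ⊕ (Fin s' ⊕ (Fin s' ⊕ Fin (p - s))))
        (Fin (p - s) ⊕ (Fin s' ⊕ (Fin s' ⊕ Fin (p - s)))) ℂ)
      (hρ : IsProjectiveRep ρ (ρX (-1) (p - s)) (ρX 1 s')) :
      ∃ ρ₂ : Uq p →ₐ[ℂ] Matrix (Fin (p - s) ⊕ (Fin s ⊕ (Fin s ⊕ Fin (p - s))))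
          (Fin (p - s) ⊕ (Fin s ⊕ (Fin s ⊕ Fin (p - s)))) ℂ,
        IsProjectiveRep ρ₂ (ρX (-1) (p - s)) (ρX 1 s) ∧ topToSocle ρ = topToSocle ρ₂ := by
    subst h
    exact ⟨ρ, hρ, rfl⟩
  have hρ := hP.isProjectiveRep hX (.inr rfl) (s := p - s) (by omega) (by omega)
  rw [neg_neg] at hρ
  obtain ⟨ρ₂, hρ₂, h⟩ := transport _ (by omega) _ hρ
  exact ⟨ρ₂, hρ₂, congrArg (topToSocle (ρP 1 s) + ·) h⟩

lemma isSLF_GOf (hp : 2 ≤ p) : IsSLF p (GOf p ρP s) := by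
  obtain ⟨ρ₂, hρ₂, h⟩ := exists_GOf_eq_topToSocle_add hX hP hs hsp
  rw [h]
  exact (hP.isProjectiveRep hX (.inl rfl) hs hsp).isSLF_topToSocle_add hp hρ₂

lemma GOf_KK_pow (c : ℕ) : GOf p ρP s (KK p ^ c) = 0 := by
  obtain ⟨ρ₂, hρ₂, h⟩ := exists_GOf_eq_topToSocle_add hX hP hs hsp
  rw [h, LinearMap.add_apply, (hP.isProjectiveRep hX (.inl rfl) hs hsp).topToSocle_KK_pow,
    hρ₂.topToSocle_KK_pow, add_zero]

lemma GOf_casimir_mul (hp : 2 ≤ p) (x : Uq p) :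
    GOf p ρP s (casimir p * x) = (q p ^ s + (q p ^ s)⁻¹) * GOf p ρP s x +
      qDiff p ^ 2 * linkedChi p ρX s x := by
  have hq := q_ne_zero p
  obtain ⟨ρ₂, hρ₂, h⟩ := exists_GOf_eq_topToSocle_add hX hP hs hsp
  have hρ₁ := hP.isProjectiveRep hX (.inl rfl) hs hsp
  have hσ := hX.isHighestWeightRep hp (.inl rfl) (s := s) (by omega)
  have hσ' := hX.isHighestWeightRep hp (.inr rfl) (p.sub_le s)
  have hweight : -1 * q p ^ ((p - s : ℕ) : ℤ) = (q p ^ s)⁻¹ := by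
    rw [zpow_natCast, pow_sub₀ _ hq (by omega), q_pow_self hp]
    ring
  rw [h, LinearMap.add_apply,
    hρ₁.topToSocle_casimir_mul hp hρ₂ (mul_ne_zero one_ne_zero (zpow_ne_zero _ hq)) hσ hσ'
      (by omega),
    hρ₂.topToSocle_casimir_mul hp hρ₁ (mul_ne_zero (by norm_num) (zpow_ne_zero _ hq)) hσ' hσ
      (by omega), q_mul_zpow_sub_one, q_mul_zpow_sub_one, hweight, inv_inv, one_mul, zpow_natCast,
    linkedChi, LinearMap.add_apply, LinearMap.add_apply]
  ring

end GForms

/-! ### Convolution with `χ^+_2` -/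

section TwoDimensional

variable {p : ℕ} (hp : 2 ≤ p) {Δ : Uq p →ₐ[ℂ] (Uq p ⊗[ℂ] Uq p)} (hΔ : IsCoprod p Δ)
  {ρ : Uq p →ₐ[ℂ] Matrix (Fin 2) (Fin 2) ℂ} (hρ : IsHighestWeightRep ρ (q p))

include hΔ hρ

lemma comatrix_two_KK_pow (c : ℕ) :
    comatrix Δ ρ (KK p ^ c) = !![q p ^ c • KK p ^ c, 0; 0, (q p ^ c)⁻¹ • KK p ^ c] := by
  have comatrix_KK : comatrix Δ ρ (KK p) = Matrix.diagonal ![q p • KK p, (q p)⁻¹ • KK p] := by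
    ext i j
    rw [comatrix_KK_apply ρ hΔ, hρ.map_KK]
    fin_cases i <;> fin_cases j <;> simp [hwWeight]
    field_simp [q_ne_zero p]
  rw [map_pow, comatrix_KK, Matrix.diagonal_pow]
  ext i j
  fin_cases i <;> fin_cases j <;> simp [smul_pow]

include hp

lemma comatrix_two_casimir :
    comatrix Δ ρ (casimir p) =
      !![q p • casimir p - ((q p)⁻¹ * qDiff p) • KKinv p, qDiff p ^ 2 • FF p;
        (qDiff p ^ 2 * q p) • (KKinv p * EE p),
        (q p)⁻¹ • casimir p + (q p * qDiff p) • KKinv p] := by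
  have hq := q_ne_zero p
  have hcoeff : hwCoeff p (q p) 1 = 1 := by
    have h := hwCoeff_succ_sub hp hq 0
    rwa [hwCoeff_zero, sub_zero, hwWeight_zero, ← qDiff, inv_mul_cancel₀ (qDiff_ne_zero hp)] at h
  have comatrix_EE : comatrix Δ ρ (EE p) = !![q p • EE p, 1; 0, (q p)⁻¹ • EE p] := by
    ext i j
    rw [comatrix_EE_apply ρ hΔ, hρ.map_EE, hρ.map_KK]
    fin_cases i <;> fin_cases j <;> simp [hwWeight, raising, hcoeff]
    field_simp
  have comatrix_FF : comatrix Δ ρ (FF p) = !![FF p, 0; KKinv p, FF p] := by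
    ext i j
    rw [comatrix_FF_apply ρ hΔ, hρ.map_FF]
    fin_cases i <;> fin_cases j <;> simp [XF]
  have comatrix_KKinv : comatrix Δ ρ (KKinv p) =
      !![(q p)⁻¹ • KKinv p, 0; 0, q p • KKinv p] := by
    ext i j
    rw [comatrix_KKinv_apply ρ hΔ, hρ.map_KKinv hq]
    fin_cases i <;> fin_cases j <;> simp [hwWeight]
    field_simp
  have comatrix_KK := comatrix_two_KK_pow hΔ hρ 1
  simp only [pow_one] at comatrix_KK
  conv_lhs => rw [casimir, map_add, map_add, map_smul, map_smul, map_smul, map_mul, comatrix_EE,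
    comatrix_FF, comatrix_KK, comatrix_KKinv, Matrix.mul_fin_two]
  ext i j
  fin_cases i <;> fin_cases j <;>
    simp only [Algebra.mul_smul_comm, mul_zero, add_zero, mul_one, zero_mul, smul_zero,
      Matrix.smul_of, Matrix.smul_cons, smul_smul, Matrix.smul_empty, smul_add, Matrix.of_add_of,
      Matrix.add_cons, Matrix.head_cons, Matrix.tail_cons, Matrix.empty_add_empty, Fin.zero_eta,
      Fin.mk_one, Matrix.add_apply, Matrix.of_apply, Matrix.cons_val', Matrix.cons_val_zero,
      Matrix.cons_val_one, Matrix.cons_val_fin_one, casimir] <;>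
    match_scalars <;> grind [qDiff]

lemma comatrix_two_casimir_mul_self :
    comatrix Δ ρ (casimir p) * comatrix Δ ρ (casimir p) =
      (q p + (q p)⁻¹) • casimir p • comatrix Δ ρ (casimir p) -
        (casimir p * casimir p + algebraMap ℂ (Uq p) (qDiff p ^ 2)) • 1 := by
  have hq := q_ne_zero p
  have casimir_central (x : Uq p) : x * casimir p = casimir p * x := (casimir_commute hp x).eq.symm
  have KKinv_EE_KKinv : KKinv p * EE p * KKinv p = q p ^ 2 • (KKinv p * (KKinv p * EE p)) := by
    rw [KKinv_mul_EE, mul_smul_comm, smul_inv_smul₀ (pow_ne_zero 2 hq), ← mul_assoc, ← KKinv_mul_EE]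
  have KKinv_mul_KK := KKinv_mul_KK p
  have FF_KKinv_EE : FF p * (KKinv p * EE p) = (qDiff p ^ 2 * q p ^ 2)⁻¹ •
      (casimir p * KKinv p - q p • 1 - (q p)⁻¹ • (KKinv p * KKinv p)) := by
    have h : FF p * KKinv p = (q p ^ 2)⁻¹ • (KKinv p * FF p) := by
      rw [KKinv_mul_FF, inv_smul_smul₀ (pow_ne_zero 2 hq)]
    rw [← mul_assoc, h, smul_mul_assoc, mul_assoc, FF_mul_EE hp, mul_smul_comm, smul_smul, mul_inv,
      mul_comm (q p ^ 2)⁻¹, mul_sub, mul_sub, mul_smul_comm, mul_smul_comm, casimir_central,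
      KKinv_mul_KK]
  have KKinv_EE_FF : KKinv p * EE p * FF p = (qDiff p ^ 2)⁻¹ •
      (casimir p * KKinv p - (q p)⁻¹ • 1 - q p • (KKinv p * KKinv p)) := by
    rw [mul_assoc, EE_mul_FF hp, mul_smul_comm, mul_sub, mul_sub, mul_smul_comm, mul_smul_comm,
      casimir_central, KKinv_mul_KK]
  rw [comatrix_two_casimir hp hΔ hρ, Matrix.mul_fin_two]
  ext i j
  fin_cases i <;> fin_cases j <;>
    simp only [mul_sub, sub_mul, mul_add, add_mul, smul_add, smul_smul, mul_inv_rev, mul_one,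
      mul_zero, sub_zero, Algebra.mul_smul_comm, Algebra.smul_mul_assoc, smul_eq_mul,
      casimir_central, KKinv_EE_KKinv, FF_KKinv_EE, KKinv_EE_FF, KKinv_mul_FF,
      Algebra.algebraMap_eq_smul_one, Fin.zero_eta, Fin.mk_one, Matrix.of_apply,
      Matrix.cons_val', Matrix.cons_val_zero, Matrix.cons_val_one, Matrix.cons_val_fin_one,
      Matrix.smul_of, Matrix.smul_cons, Matrix.smul_empty, Matrix.sub_apply, Matrix.smul_apply,
      Matrix.one_apply_eq, ne_eq, zero_ne_one, one_ne_zero, not_false_eq_true,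
      Matrix.one_apply_ne] <;>
    match_scalars <;> grind [qDiff]

end TwoDimensional

section ConvTwoDimensional

variable {p : ℕ} {Δ : Uq p →ₐ[ℂ] (Uq p ⊗[ℂ] Uq p)} (hΔ : IsCoprod p Δ)
  {ρ : Uq p →ₐ[ℂ] Matrix (Fin 2) (Fin 2) ℂ} (hρ : IsHighestWeightRep ρ (q p))
  (φ : Uq p →ₗ[ℂ] ℂ)

include hΔ hρ

lemma conv_two_KK_pow (c : ℕ) :
    conv p Δ φ (chiOf p ρ) (KK p ^ c) = (q p ^ c + (q p ^ c)⁻¹) * φ (KK p ^ c) := by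
  rw [conv_chiOf_apply, comatrix_two_KK_pow hΔ hρ, Matrix.trace_fin_two_of, map_add, map_smul,
    map_smul, smul_eq_mul, smul_eq_mul, add_mul]

variable (hp : 2 ≤ p)
include hp

lemma conv_two_casimir_mul_KK_pow (c : ℕ) :
    conv p Δ φ (chiOf p ρ) (casimir p * KK p ^ c) =
      (q p * q p ^ c + (q p * q p ^ c)⁻¹) * φ (casimir p * KK p ^ c) +
        qDiff p * (q p / q p ^ c - q p ^ c / q p) * φ (KKinv p * KK p ^ c) := by
  rw [conv_chiOf_apply, map_mul, comatrix_two_KK_pow hΔ hρ, comatrix_two_casimir hp hΔ hρ,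
    Matrix.mul_fin_two, Matrix.trace_fin_two_of]
  simp only [mul_zero, add_zero, zero_add, sub_mul, add_mul, smul_mul_assoc, mul_smul_comm, map_add,
    map_sub, map_smul, smul_eq_mul]
  ring

lemma conv_two_casimir_mul_casimir_mul (x : Uq p) :
    conv p Δ φ (chiOf p ρ) (casimir p * (casimir p * x)) =
      (q p + (q p)⁻¹) *
          conv p Δ (φ ∘ₗ LinearMap.mulLeft ℂ (casimir p)) (chiOf p ρ) (casimir p * x) -
        conv p Δ (φ ∘ₗ LinearMap.mulLeft ℂ (casimir p * casimir p)) (chiOf p ρ) x -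
        qDiff p ^ 2 * conv p Δ φ (chiOf p ρ) x := by
  simp only [conv_chiOf_apply, LinearMap.comp_apply, LinearMap.mulLeft_apply]
  rw [← mul_assoc, map_mul (comatrix Δ ρ) (casimir p * casimir p), map_mul (comatrix Δ ρ),
    comatrix_two_casimir_mul_self hp hΔ hρ, map_mul (comatrix Δ ρ)]
  simp only [sub_mul, add_mul, smul_mul_assoc, one_mul, add_smul, algebraMap_smul, Matrix.trace_sub,
    Matrix.trace_add, Matrix.trace_smul, map_sub, map_add, map_smul, smul_eq_mul]
  ring

lemma conv_two_casimir_mul_casimir_mul_of_jordan {φ ζ : Uq p →ₗ[ℂ] ℂ} {z e : ℂ} (hz : z ≠ 0)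
    (hφ : φ ∘ₗ LinearMap.mulLeft ℂ (casimir p) = (z + z⁻¹) • φ + e • ζ)
    (hζ : ζ ∘ₗ LinearMap.mulLeft ℂ (casimir p) = (z + z⁻¹) • ζ) (x : Uq p) :
    conv p Δ φ (chiOf p ρ) (casimir p * (casimir p * x)) =
      ((q p * z + (q p * z)⁻¹) + (z / q p + (z / q p)⁻¹)) *
          conv p Δ φ (chiOf p ρ) (casimir p * x) +
        -((q p * z + (q p * z)⁻¹) * (z / q p + (z / q p)⁻¹)) * conv p Δ φ (chiOf p ρ) x +
        e * ((q p + (q p)⁻¹) * conv p Δ ζ (chiOf p ρ) (casimir p * x) -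
          2 * (z + z⁻¹) * conv p Δ ζ (chiOf p ρ) x) := by
  have hq := q_ne_zero p
  have hφ₂ : φ ∘ₗ LinearMap.mulLeft ℂ (casimir p * casimir p) =
      (z + z⁻¹) ^ 2 • φ + (2 * (z + z⁻¹) * e) • ζ := by
    rw [LinearMap.mulLeft_mul, ← LinearMap.comp_assoc, hφ, LinearMap.add_comp, LinearMap.smul_comp,
      LinearMap.smul_comp, hφ, hζ]
    module
  rw [conv_two_casimir_mul_casimir_mul hΔ hρ _ hp, hφ, hφ₂]
  simp only [conv_add_left, conv_smul_left, LinearMap.add_apply, LinearMap.smul_apply, smul_eq_mul,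
    qDiff]
  field_simp
  ring

end ConvTwoDimensional

section XCharacters

variable {p : ℕ} (hp : 2 ≤ p)
  {ρX : (α : ℂ) → (s : ℕ) → (Uq p →ₐ[ℂ] Matrix (Fin s) (Fin s) ℂ)} (hX : IsXRep p ρX)
  {α : ℂ} (hα : α = 1 ∨ α = -1)

include hp hX hα

lemma chiOf_X_casimir_mul {s : ℕ} (hs : s ≤ p) (x : Uq p) :
    chiOf p (ρX α s) (casimir p * x) =
      (α * q p ^ s + (α * q p ^ s)⁻¹) * chiOf p (ρX α s) x := by
  rw [(hX.isHighestWeightRep hp hα hs).chiOf_casimir_mul hp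
    (ne_zero_of_pow_two_mul_eq_one hp (mul_zpow_pow_two_mul hp hα _)), q_mul_zpow_sub_one,
    zpow_natCast]

lemma chiOf_X_KK_pow {s : ℕ} (hs : s ≤ p) (c : ℕ) :
    chiOf p (ρX α s) (KK p ^ c) =
      ∑ i ∈ Finset.range s, (α * q p ^ s / q p ^ (2 * i + 1)) ^ c := by
  rw [(hX.isHighestWeightRep hp hα hs).chiOf_KK_pow]
  refine Finset.sum_congr rfl fun i _ ↦ congrArg (· ^ c) ?_
  have hq := q_ne_zero p
  rw [hwWeight, zpow_sub_one₀ hq, zpow_natCast, pow_succ]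
  field_simp

lemma chiOf_X_succ_KK_pow {s : ℕ} (hs : s + 1 ≤ p) (c : ℕ) :
    chiOf p (ρX α (s + 1)) (KK p ^ c) =
      q p ^ c * chiOf p (ρX α s) (KK p ^ c) + ((α * q p ^ s) ^ c)⁻¹ := by
  have hq := q_ne_zero p
  have hα_inv : α⁻¹ = α := by rcases hα with rfl | rfl <;> norm_num
  rw [chiOf_X_KK_pow hp hX hα hs, chiOf_X_KK_pow hp hX hα (by omega), Finset.sum_range_succ,
    Finset.mul_sum, ← inv_pow, mul_inv, hα_inv]
  congr 1
  · refine Finset.sum_congr rfl fun i _ ↦ ?_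
    rw [← mul_pow]
    congr 1
    ring
  · congr 1
    field_simp
    ring

lemma sub_mul_chiOf_X_KK_pow {s : ℕ} (hs : s ≤ p) (c : ℕ) :
    (q p ^ c - (q p ^ c)⁻¹) * chiOf p (ρX α s) (KK p ^ c) =
      (α * q p ^ s) ^ c - ((α * q p ^ s) ^ c)⁻¹ := by
  have hq := q_ne_zero p
  have hα_inv : α⁻¹ = α := by rcases hα with rfl | rfl <;> norm_num
  rw [chiOf_X_KK_pow hp hX hα hs, Finset.mul_sum]
  convert Finset.sum_range_sub' (fun i ↦ (α * q p ^ s / q p ^ (2 * i)) ^ c) s using 1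
  · refine Finset.sum_congr rfl fun i _ ↦ ?_
    rw [sub_mul, ← inv_pow, ← mul_pow, ← mul_pow]
    congr 2 <;> (field_simp; ring)
  · rw [mul_zero, pow_zero, div_one, ← inv_pow, mul_inv, hα_inv]
    congr 2
    field_simp
    ring

lemma chiOf_X_KK_pow_eq_pred {s : ℕ} (hs : s + 1 ≤ p) (c : ℕ) :
    chiOf p (ρX α s) (KK p ^ c) =
      (q p ^ c)⁻¹ * chiOf p (ρX α (s + 1)) (KK p ^ c) - ((α * q p ^ (s + 1)) ^ c)⁻¹ := by
  have hq := q_ne_zero p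
  rw [chiOf_X_succ_KK_pow hp hX hα hs, pow_succ, ← mul_assoc, mul_pow _ (q p), mul_inv, mul_add,
    inv_mul_cancel_left₀ (pow_ne_zero c hq)]
  ring

lemma sub_mul_chiOf_X_KKinv_mul_KK_pow {s : ℕ} (hs : s ≤ p) (c : ℕ) :
    (q p / q p ^ c - q p ^ c / q p) * chiOf p (ρX α s) (KKinv p * KK p ^ c) =
      α * q p ^ s / (α * q p ^ s) ^ c - (α * q p ^ s) ^ c / (α * q p ^ s) := by
  have pow_eq {z : ℂ} (hz : z ^ (2 * p) = 1) : z ^ (2 * p - 1 + c) = z ^ c / z := by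
    have hz₀ := ne_zero_of_pow_two_mul_eq_one hp hz
    rw [pow_add, eq_div_iff hz₀, mul_right_comm, pow_sub_one_mul (by omega), hz, one_mul]
  have h := sub_mul_chiOf_X_KK_pow hp hX hα hs (2 * p - 1 + c)
  rw [pow_add (KK p), ← KKinv_eq_pow hp, pow_eq (q_isPrimitiveRoot hp).pow_eq_one,
    pow_eq (mod_cast mul_zpow_pow_two_mul hp hα s), inv_div, inv_div] at h
  linear_combination -h

lemma chiOf_X_cartanInvolution_KK_pow {s : ℕ} (hs : s ≤ p) (c : ℕ) :
    chiOf p (ρX α s) (cartanInvolution p (KK p ^ c)) = chiOf p (ρX α s) (KK p ^ c) := by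
  have pow_eq {z : ℂ} (hz : z ^ (2 * p) = 1) : z ^ ((2 * p - 1) * c) = (z ^ c)⁻¹ := by
    rw [pow_mul, pow_sub₀ _ (ne_zero_of_pow_two_mul_eq_one hp hz) (by omega), hz, one_mul, pow_one,
      inv_pow]
  rw [cartanInvolution_KK_pow hp]
  induction s with
  | zero => simp [chiOf]
  | succ s ih =>
    have root : (α * q p ^ s) ^ (2 * p) = 1 := by
      simpa using mul_zpow_pow_two_mul hp hα s
    rw [chiOf_X_succ_KK_pow hp hX hα hs, chiOf_X_succ_KK_pow hp hX hα hs, ih (by omega),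
      pow_eq (q_isPrimitiveRoot hp).pow_eq_one, pow_eq root, inv_inv]
    linear_combination -sub_mul_chiOf_X_KK_pow hp hX hα (s := s) (by omega) c

lemma chiOf_X_comp_cartanInvolution {s : ℕ} (hs : s ≤ p) :
    chiOf p (ρX α s) ∘ₗ (cartanInvolution p).toLinearMap = chiOf p (ρX α s) := by
  refine (isSLF_chiOf _).comp_cartanInvolution.eq_of_casimir_eigenform hp (isSLF_chiOf _)
    (fun x ↦ ?_) (chiOf_X_casimir_mul hp hX hα hs)
    (chiOf_X_cartanInvolution_KK_pow hp hX hα hs)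
  rw [LinearMap.comp_apply, AlgHom.toLinearMap_apply, map_mul, cartanInvolution_casimir hp,
    chiOf_X_casimir_mul hp hX hα hs, LinearMap.comp_apply, AlgHom.toLinearMap_apply]

end XCharacters

section ConvX

variable {p : ℕ} (hp : 2 ≤ p)
  {ρX : (α : ℂ) → (s : ℕ) → (Uq p →ₐ[ℂ] Matrix (Fin s) (Fin s) ℂ)} (hX : IsXRep p ρX)
  {Δ : Uq p →ₐ[ℂ] (Uq p ⊗[ℂ] Uq p)} (hΔ : IsCoprod p Δ)

include hp hX

lemma isHighestWeightRep_X_two : IsHighestWeightRep (ρX 1 2) (q p) := by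
  simpa using hX.isHighestWeightRep hp (.inl rfl) hp

include hΔ

lemma conv_chiOf_X_chiOf_X_two {α : ℂ} (hα : α = 1 ∨ α = -1) {s : ℕ} (hs : s + 2 ≤ p) :
    conv p Δ (chiOf p (ρX α (s + 1))) (chiOf p (ρX 1 2)) =
      chiOf p (ρX α (s + 2)) + chiOf p (ρX α s) := by
  have hρ := isHighestWeightRep_X_two hp hX
  have hq := q_ne_zero p
  have casimir_mul {s : ℕ} (hs : s ≤ p) (x : Uq p) := chiOf_X_casimir_mul hp hX hα hs x
  have pow_formula (c : ℕ) := sub_mul_chiOf_X_KK_pow hp hX hα (s := s + 1) (by omega) c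
  have pow_formula' (c : ℕ) := sub_mul_chiOf_X_KKinv_mul_KK_pow hp hX hα (s := s + 1) (by omega) c
  have succ_formula (c : ℕ) := chiOf_X_succ_KK_pow hp hX hα hs c
  have pred_formula (c : ℕ) := chiOf_X_KK_pow_eq_pred hp hX hα (s := s) (by omega) c
  obtain ⟨z, hz_def⟩ : ∃ z, z = α * q p ^ (s + 1) := ⟨_, rfl⟩
  have hz : z ≠ 0 :=
    hz_def ▸ mul_ne_zero (by rcases hα with rfl | rfl <;> norm_num) (pow_ne_zero _ hq)
  have weight_succ : α * q p ^ (s + 2) = q p * z := by rw [hz_def]; ring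
  have weight_pred : α * q p ^ s = z / q p := by rw [hz_def, pow_succ]; field_simp
  rw [← hz_def] at pow_formula pow_formula' succ_formula pred_formula
  refine sub_eq_zero.mp (((isSLF_conv_chiOf Δ (ρX 1 2) (isSLF_chiOf _)).sub ((isSLF_chiOf _).add
    (isSLF_chiOf _))).eq_zero_of_casimir_recurrence hp
    (u := (q p * z + (q p * z)⁻¹) + (z / q p + (z / q p)⁻¹))
    (v := - ((q p * z + (q p * z)⁻¹) * (z / q p + (z / q p)⁻¹))) (fun x ↦ ?_)
    (fun c ↦ ?_) fun c ↦ ?_)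
  · simp only [LinearMap.sub_apply, LinearMap.add_apply]
    rw [conv_two_casimir_mul_casimir_mul_of_jordan hΔ hρ hp (e := 0) (ζ := 0) hz _ (by simp)]
    · rw [casimir_mul hs, casimir_mul hs, casimir_mul (by omega), casimir_mul (by omega),
        weight_succ, weight_pred]
      ring
    · ext x
      simpa [hz_def] using casimir_mul (by omega) x
  · rw [LinearMap.sub_apply, LinearMap.add_apply, conv_two_KK_pow hΔ hρ, succ_formula, pred_formula]
    ring
  · rw [LinearMap.sub_apply, LinearMap.add_apply, conv_two_casimir_mul_KK_pow hΔ hρ _ hp,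
      casimir_mul hs, casimir_mul (by omega), casimir_mul (by omega), weight_succ, weight_pred,
      succ_formula, pred_formula, mul_assoc (qDiff p), pow_formula', ← hz_def, qDiff, inv_div]
    linear_combination ((q p - (q p)⁻¹) / z) * pow_formula c

end ConvX

section LinkedChi

variable {p : ℕ} (hp : 2 ≤ p)
  {ρX : (α : ℂ) → (s : ℕ) → (Uq p →ₐ[ℂ] Matrix (Fin s) (Fin s) ℂ)} (hX : IsXRep p ρX)

include hp

lemma neg_one_mul_q_pow_sub {s : ℕ} (hs : s ≤ p) : -1 * q p ^ (p - s) = (q p ^ s)⁻¹ := by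
  rw [pow_sub₀ _ (q_ne_zero p) hs, q_pow_self hp, neg_one_mul, neg_one_mul, neg_neg]

include hX

lemma linkedChi_casimir_mul {s : ℕ} (hs : s ≤ p) (x : Uq p) :
    linkedChi p ρX s (casimir p * x) = (q p ^ s + (q p ^ s)⁻¹) * linkedChi p ρX s x := by
  rw [linkedChi, LinearMap.add_apply, LinearMap.add_apply,
    chiOf_X_casimir_mul hp hX (.inl rfl) hs, chiOf_X_casimir_mul hp hX (.inr rfl) (p.sub_le s),
    neg_one_mul_q_pow_sub hp hs, inv_inv, one_mul]
  ring

lemma linkedChi_succ_KK_pow {s : ℕ} (hs : s + 1 ≤ p) (c : ℕ) :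
    linkedChi p ρX (s + 1) (KK p ^ c) = q p ^ c * linkedChi p ρX s (KK p ^ c) := by
  have hsub : p - s = p - (s + 1) + 1 := by omega
  have hneg := sub_mul_chiOf_X_KK_pow hp hX (.inr rfl) (p.sub_le s) c
  have hpred := chiOf_X_KK_pow_eq_pred hp hX (.inr rfl) (s := p - (s + 1)) (by omega) c
  rw [← hsub] at hpred
  rw [neg_one_mul_q_pow_sub hp (by omega), inv_pow, inv_inv] at hneg hpred
  rw [linkedChi, linkedChi, LinearMap.add_apply, LinearMap.add_apply,
    chiOf_X_succ_KK_pow hp hX (.inl rfl) hs, hpred, one_mul]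
  linear_combination -hneg

lemma sub_mul_linkedChi_KK_pow {s : ℕ} (hs : s ≤ p) (c : ℕ) :
    (q p ^ c - (q p ^ c)⁻¹) * linkedChi p ρX s (KK p ^ c) = 0 := by
  rw [linkedChi, LinearMap.add_apply, mul_add, sub_mul_chiOf_X_KK_pow hp hX (.inl rfl) hs,
    sub_mul_chiOf_X_KK_pow hp hX (.inr rfl) (p.sub_le s), neg_one_mul_q_pow_sub hp hs, one_mul,
    inv_pow, inv_inv, sub_add_sub_cancel, sub_self]

lemma conv_linkedChi_chiOf_X_two {Δ : Uq p →ₐ[ℂ] (Uq p ⊗[ℂ] Uq p)} (hΔ : IsCoprod p Δ) {s : ℕ}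
    (hs : s + 2 ≤ p) :
    conv p Δ (linkedChi p ρX (s + 1)) (chiOf p (ρX 1 2)) =
      linkedChi p ρX (s + 2) + linkedChi p ρX s := by
  have hsub₁ : p - (s + 1) = p - (s + 2) + 1 := by omega
  have hsub₂ : p - s = p - (s + 2) + 2 := by omega
  rw [linkedChi, linkedChi, linkedChi, conv_add_left, hsub₁, hsub₂,
    conv_chiOf_X_chiOf_X_two hp hX hΔ (.inl rfl) hs,
    conv_chiOf_X_chiOf_X_two hp hX hΔ (.inr rfl) (by omega)]
  abel

lemma linkedChi_comp_cartanInvolution {s : ℕ} (hs : s ≤ p) :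
    linkedChi p ρX s ∘ₗ (cartanInvolution p).toLinearMap = linkedChi p ρX s := by
  rw [linkedChi, LinearMap.add_comp, chiOf_X_comp_cartanInvolution hp hX (.inl rfl) hs,
    chiOf_X_comp_cartanInvolution hp hX (.inr rfl) (p.sub_le s)]

end LinkedChi

/-- The form `[s] G_s`, which also makes sense for `s = 0` and `s = p`, where it is zero. -/
def scaledG (p : ℕ) (ρP : (α : ℂ) → (s : ℕ) → (Uq p →ₐ[ℂ] Matrix (PIdx p s) (PIdx p s) ℂ))
    (s : ℕ) : Uq p →ₗ[ℂ] ℂ :=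
  qi p s • GOf p ρP s

section ScaledG

variable {p : ℕ} (hp : 2 ≤ p)
  {ρX : (α : ℂ) → (s : ℕ) → (Uq p →ₐ[ℂ] Matrix (Fin s) (Fin s) ℂ)} (hX : IsXRep p ρX)
  {ρP : (α : ℂ) → (s : ℕ) → (Uq p →ₐ[ℂ] Matrix (PIdx p s) (PIdx p s) ℂ)}

include hp

variable (ρP) in
lemma scaledG_one : scaledG p ρP 1 = GOf p ρP 1 := by
  rw [scaledG, Nat.cast_one, qi_one hp, one_smul]

lemma qi_eq_zero_or {s : ℕ} (hs : s ≤ p) : qi p s = 0 ∨ 1 ≤ s ∧ s ≤ p - 1 := by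
  rcases s.eq_zero_or_pos with rfl | hs₀
  · exact .inl (by simp [qi])
  rcases hs.eq_or_lt with rfl | hsp
  · exact .inl (qi_self hp)
  · exact .inr ⟨hs₀, by omega⟩

include hX
variable (hP : IsPRep p ρP)
include hP

lemma isSLF_scaledG {s : ℕ} (hs : s ≤ p) : IsSLF p (scaledG p ρP s) := by
  rcases qi_eq_zero_or hp hs with h | ⟨hs, hsp⟩
  · exact fun x y ↦ by simp [scaledG, h]
  · exact (isSLF_GOf hX hP hs hsp hp).smul _

lemma scaledG_KK_pow {s : ℕ} (hs : s ≤ p) (c : ℕ) : scaledG p ρP s (KK p ^ c) = 0 := by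
  rcases qi_eq_zero_or hp hs with h | ⟨hs, hsp⟩
  · rw [scaledG, h, zero_smul, LinearMap.zero_apply]
  · rw [scaledG, LinearMap.smul_apply, GOf_KK_pow hX hP hs hsp, smul_zero]

lemma scaledG_casimir_mul {s : ℕ} (hs : s ≤ p) (x : Uq p) :
    scaledG p ρP s (casimir p * x) = (q p ^ s + (q p ^ s)⁻¹) * scaledG p ρP s x +
      qDiff p * (q p ^ s - (q p ^ s)⁻¹) * linkedChi p ρX s x := by
  have hqi := qi_mul_qDiff hp s
  rw [zpow_natCast] at hqi
  rw [← hqi]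
  rcases qi_eq_zero_or hp hs with h | ⟨hs, hsp⟩
  · simp [scaledG, h]
  · rw [scaledG, LinearMap.smul_apply, LinearMap.smul_apply, smul_eq_mul, smul_eq_mul,
      GOf_casimir_mul hX hP hs hsp hp]
    ring

variable {Δ : Uq p →ₐ[ℂ] (Uq p ⊗[ℂ] Uq p)} (hΔ : IsCoprod p Δ) {s : ℕ}
include hΔ

lemma conv_scaledG_chiOf_X_two_casimir_mul_KK_pow (hs : s + 2 ≤ p) (c : ℕ) :
    conv p Δ (scaledG p ρP (s + 1)) (chiOf p (ρX 1 2)) (casimir p * KK p ^ c) =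
      scaledG p ρP (s + 2) (casimir p * KK p ^ c) + scaledG p ρP s (casimir p * KK p ^ c) := by
  have hρ := isHighestWeightRep_X_two hp hX
  have hq := q_ne_zero p
  have KK_pow {s : ℕ} (hs : s ≤ p) (c : ℕ) := scaledG_KK_pow hp hX hP hs c
  have casimir_mul {s : ℕ} (hs : s ≤ p) (x : Uq p) := scaledG_casimir_mul hp hX hP hs x
  have weight_succ : q p ^ (s + 2) = q p * q p ^ (s + 1) := by ring
  have weight_pred : q p ^ s = q p ^ (s + 1) / q p := by rw [pow_succ]; field_simp
  have linked_succ := linkedChi_succ_KK_pow hp hX (s := s + 1) (by omega) c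
  have linked_pred : linkedChi p ρX s (KK p ^ c) =
      (q p ^ c)⁻¹ * linkedChi p ρX (s + 1) (KK p ^ c) := by
    rw [linkedChi_succ_KK_pow hp hX (by omega), inv_mul_cancel_left₀ (pow_ne_zero c hq)]
  rw [conv_two_casimir_mul_KK_pow hΔ hρ _ hp, KKinv_eq_pow hp, ← pow_add, casimir_mul hs,
    casimir_mul (by omega), casimir_mul (by omega), KK_pow hs, KK_pow (by omega),
    KK_pow (by omega), KK_pow (by omega), linked_succ, linked_pred, weight_succ, weight_pred,
    inv_div]
  linear_combination (- qDiff p * (q p - (q p)⁻¹) / q p ^ (s + 1)) *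
    sub_mul_linkedChi_KK_pow hp hX (s := s + 1) (by omega) c

lemma conv_scaledG_chiOf_X_two (hs : s + 2 ≤ p) :
    conv p Δ (scaledG p ρP (s + 1)) (chiOf p (ρX 1 2)) =
      scaledG p ρP (s + 2) + scaledG p ρP s := by
  have hρ := isHighestWeightRep_X_two hp hX
  have hq := q_ne_zero p
  have isSLF {s : ℕ} (hs : s ≤ p) := isSLF_scaledG hp hX hP hs
  have KK_pow {s : ℕ} (hs : s ≤ p) (c : ℕ) := scaledG_KK_pow hp hX hP hs c
  have casimir_mul {s : ℕ} (hs : s ≤ p) (x : Uq p) := scaledG_casimir_mul hp hX hP hs x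
  have linked_mul {s : ℕ} (hs : s ≤ p) (x : Uq p) := linkedChi_casimir_mul hp hX hs x
  obtain ⟨z, hz_def⟩ : ∃ z, z = q p ^ (s + 1) := ⟨_, rfl⟩
  have hz : z ≠ 0 := hz_def ▸ pow_ne_zero _ hq
  have weight_succ : q p ^ (s + 2) = q p * z := by rw [hz_def]; ring
  have weight_pred : q p ^ s = z / q p := by rw [hz_def, pow_succ]; field_simp
  refine sub_eq_zero.mp (((isSLF_conv_chiOf Δ (ρX 1 2) (isSLF (by omega))).sub ((isSLF hs).add
    (isSLF (by omega)))).eq_zero_of_casimir_recurrence hp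
    (u := (q p * z + (q p * z)⁻¹) + (z / q p + (z / q p)⁻¹))
    (v := - ((q p * z + (q p * z)⁻¹) * (z / q p + (z / q p)⁻¹))) (fun x ↦ ?_)
    (fun c ↦ ?_) fun c ↦ ?_)
  · simp only [LinearMap.sub_apply, LinearMap.add_apply]
    rw [conv_two_casimir_mul_casimir_mul_of_jordan hΔ hρ hp (ζ := linkedChi p ρX (s + 1))
        (e := qDiff p * (z - z⁻¹)) hz,
      conv_linkedChi_chiOf_X_two hp hX hΔ hs, LinearMap.add_apply, LinearMap.add_apply,
      linked_mul hs, linked_mul (by omega), casimir_mul hs, casimir_mul hs, casimir_mul (by omega),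
      casimir_mul (by omega), linked_mul hs, linked_mul (by omega), weight_succ, weight_pred]
    · field_simp
      ring
    · ext x
      exact hz_def ▸ casimir_mul (by omega) x
    · ext x
      exact hz_def ▸ linked_mul (by omega) x
  · rw [LinearMap.sub_apply, LinearMap.add_apply, conv_two_KK_pow hΔ hρ, KK_pow hs,
      KK_pow (by omega), KK_pow (by omega), mul_zero, add_zero, sub_zero]
  · rw [LinearMap.sub_apply, LinearMap.add_apply,
      conv_scaledG_chiOf_X_two_casimir_mul_KK_pow hp hX hP hΔ hs, sub_self]

end ScaledG

section GFormProducts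

variable {p : ℕ} (hp : 2 ≤ p)
  {ρX : (α : ℂ) → (s : ℕ) → (Uq p →ₐ[ℂ] Matrix (Fin s) (Fin s) ℂ)} (hX : IsXRep p ρX)
  {ρP : (α : ℂ) → (s : ℕ) → (Uq p →ₐ[ℂ] Matrix (PIdx p s) (PIdx p s) ℂ)} (hP : IsPRep p ρP)
  {Δ : Uq p →ₐ[ℂ] (Uq p ⊗[ℂ] Uq p)} (hΔ : IsCoprod p Δ)

include hp hX hP

lemma GOf_comp_cartanInvolution {s : ℕ} (hs : 1 ≤ s) (hsp : s ≤ p - 1) :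
    GOf p ρP s ∘ₗ (cartanInvolution p).toLinearMap = GOf p ρP s := by
  have hG := isSLF_GOf hX hP hs hsp hp
  have linked (x : Uq p) : linkedChi p ρX s (cartanInvolution p x) = linkedChi p ρX s x :=
    LinearMap.congr_fun (linkedChi_comp_cartanInvolution hp hX (by omega)) x
  refine sub_eq_zero.mp ((hG.comp_cartanInvolution.sub hG).eq_of_casimir_eigenform hp
    (ψ := 0) (β := q p ^ s + (q p ^ s)⁻¹) (fun x y ↦ rfl) (fun x ↦ ?_) (by simp) fun c ↦ ?_)
  · simp only [LinearMap.sub_apply, LinearMap.comp_apply, AlgHom.toLinearMap_apply, map_mul,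
      cartanInvolution_casimir hp, GOf_casimir_mul hX hP hs hsp hp, linked]
    ring
  · simp only [LinearMap.sub_apply, LinearMap.comp_apply, AlgHom.toLinearMap_apply,
      cartanInvolution_KK_pow hp, GOf_KK_pow hX hP hs hsp, sub_zero, LinearMap.zero_apply]

include hΔ

lemma conv_GOf_one_chiOf_X {s : ℕ} (hs : s ≤ p) :
    conv p Δ (GOf p ρP 1) (chiOf p (ρX 1 s)) = scaledG p ρP s := by
  induction s using Nat.twoStepInduction with
  | zero => ext x; simp [conv_chiOf_apply, Matrix.trace, scaledG, qi]
  | one =>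
    obtain ⟨hK, hE, hF⟩ := hX 1 (.inl rfl) 1 le_rfl (by omega)
    rw [conv_chiOf_trivial hΔ hp (hE.trans ?_) (hF.trans ?_) (hK.trans ?_), scaledG_one hp ρP]
    all_goals
      ext i j
      obtain rfl := Subsingleton.elim i j
      simp [XE, XF, XK]
  | more s ih ih_succ =>
    have h := congrArg (conv p Δ (GOf p ρP 1)) (conv_chiOf_X_chiOf_X_two hp hX hΔ (.inl rfl) hs)
    rw [← hΔ.conv_assoc hp, ih_succ (by omega), conv_scaledG_chiOf_X_two hp hX hP hΔ hs,
      conv_add_right, ih (by omega), add_left_inj] at h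
    exact h.symm

lemma conv_chiOf_X_GOf_one {s : ℕ} (hs : s ≤ p) :
    conv p Δ (chiOf p (ρX 1 s)) (GOf p ρP 1) = qi p s • GOf p ρP s := by
  rw [hΔ.conv_eq_conv_swap_comp hp (chiOf_X_comp_cartanInvolution hp hX (.inl rfl) hs)
    (GOf_comp_cartanInvolution hp hX hP le_rfl (by omega)), conv_GOf_one_chiOf_X hp hX hP hΔ hs]
  rcases qi_eq_zero_or hp hs with h | ⟨hs, hsp⟩
  · simp [scaledG, h]
  · rw [scaledG, LinearMap.smul_comp, GOf_comp_cartanInvolution hp hX hP hs hsp]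

lemma conv_linkedChi_GOf {s t : ℕ} (hs : s ≤ p - 1) (ht : 1 ≤ t) (htp : t ≤ p - 1) :
    conv p Δ (linkedChi p ρX s) (GOf p ρP t) = 0 := by
  rw [hΔ.conv_eq_conv_swap_comp hp (linkedChi_comp_cartanInvolution hp hX (by omega))
    (GOf_comp_cartanInvolution hp hX hP ht htp), linkedChi,
    chiOf_add_chiOf_eq_chiOf_verma hp (.inl rfl) hX hs,
    (isSLF_GOf hX hP ht htp hp).conv_chiOf_verma_eq_zero hp hΔ (GOf_KK_pow hX hP ht htp),
    LinearMap.zero_comp]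

end GFormProducts

/-- (i) `G_s = (1/[s]) χ^+_s G_1`; (ii) `χ^+_p G_1 = 0`;
(iii) `(χ^+_s + χ^-_{p-s}) G_t = 0`; (iv) `V = span(χ^+_s + χ^-_{p-s}, χ^+_p, χ^-_p)` is
an ideal of `SLF(Ū_q)`. -/
theorem statement_16 (p : ℕ) (hp : 2 ≤ p)
    (ρX : (α : ℂ) → (s : ℕ) → (Uq p →ₐ[ℂ] Matrix (Fin s) (Fin s) ℂ))
    (hX : IsXRep p ρX)
    (ρP : (α : ℂ) → (s : ℕ) → (Uq p →ₐ[ℂ] Matrix (PIdx p s) (PIdx p s) ℂ))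
    (hP : IsPRep p ρP)
    (Δ : Uq p →ₐ[ℂ] (Uq p ⊗[ℂ] Uq p)) (hΔ : IsCoprod p Δ) :
    (∀ s : ℕ, 1 ≤ s → s ≤ p - 1 →
      GOf p ρP s = (qi p s)⁻¹ • conv p Δ (chiOf p (ρX 1 s)) (GOf p ρP 1))
    ∧ conv p Δ (chiOf p (ρX 1 p)) (GOf p ρP 1) = 0
    ∧ (∀ s t : ℕ, 1 ≤ s → s ≤ p - 1 → 1 ≤ t → t ≤ p - 1 →
        conv p Δ (chiOf p (ρX 1 s) + chiOf p (ρX (-1) (p - s))) (GOf p ρP t) = 0)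
    ∧ (∀ φ : Uq p →ₗ[ℂ] ℂ, IsSLF p φ →
        ∀ v ∈ Vsub p ρX, conv p Δ φ v ∈ Vsub p ρX) := by
  refine ⟨fun s hs hsp ↦ ?_, ?_, fun s t _ hsp ht htp ↦ conv_linkedChi_GOf hp hX hP hΔ hsp ht htp,
    fun φ hφ v hv ↦ conv_mem_Vsub hp hX hΔ hφ hv⟩
  · rw [conv_chiOf_X_GOf_one hp hX hP hΔ (by omega),
      inv_smul_smul₀ (qi_natCast_ne_zero hp hs (by omega))]
  · rw [conv_chiOf_X_GOf_one hp hX hP hΔ le_rfl, qi_self hp, zero_smul]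

end Uqsl2
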